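/- arXiv:1803.02992 — 8 statements merged into one kernel-verified Lean document; each statement's English description precedes it below -/
import Mathlib

section
/- Let u : ℝ → ℝ² be continuous and let b : [0, ∞) → ℝ² be differentiable with ḃ(t) = (I₂ − b(t) b(t)ᵀ) u(t) for all t ≥ 0 and ‖b(0)‖ = 1. Then ‖b(t)‖ = 1 for all t ≥ 0, i.e., the unit circle is invariant under the projected dynamics ḃ = P_b u. -/
open scoped RealInnerProductSpace
open Real Filter

/-- The orthogonal projection `P_b v = (I₂ - b bᵀ) v = v - ⟨b, v⟩ b`. -/
noncomputable def proj (b v : EuclideanSpace ℝ (Fin 2)) : EuclideanSpace ℝ (Fin 2) :=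
  v - ⟪b, v⟫ • b

/-!
Along a solution, the defect `V = 1 - ‖b‖ ^ 2` solves the scalar linear equation `V' = -2 ⟪b, u⟫ V`.
Its coefficient is bounded on compact time intervals, so by Grönwall `V` stays zero once it is zero.
-/

open Set

section InnerProductSpace

variable {E : Type*} [NormedAddCommGroup E] [InnerProductSpace ℝ E]

theorem inner_sub_inner_smul_self (b v : E) :
    ⟪b, v - ⟪b, v⟫ • b⟫ = ⟪b, v⟫ * (1 - ‖b‖ ^ 2) := by
  rw [inner_sub_right, real_inner_smul_right, real_inner_self_eq_norm_sq]
  ring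

theorem hasDerivWithinAt_one_sub_norm_sq {b : ℝ → E} {v : E} {s : Set ℝ} {t : ℝ}
    (hb : HasDerivWithinAt b (v - ⟪b t, v⟫ • b t) s t) :
    HasDerivWithinAt (fun τ => 1 - ‖b τ‖ ^ 2) (-2 * ⟪b t, v⟫ * (1 - ‖b t‖ ^ 2)) s t := by
  refine (hb.norm_sq.const_sub 1).congr_deriv ?_
  rw [inner_sub_inner_smul_self]
  ring

theorem eq_zero_of_hasDerivWithinAt_smul_self {F : Type*} [NormedAddCommGroup F] [NormedSpace ℝ F]
    {f : ℝ → F} {c : ℝ → ℝ} {a T K : ℝ} (hf : ContinuousOn f (Icc a T))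
    (hf' : ∀ t ∈ Ico a T, HasDerivWithinAt f (c t • f t) (Ici t) t)
    (hc : ∀ t ∈ Ico a T, ‖c t‖ ≤ K) (ha : f a = 0) :
    ∀ t ∈ Icc a T, f t = 0 :=
  eq_zero_of_abs_deriv_le_mul_abs_self_of_eq_zero_right hf hf' ha fun t ht =>
    (norm_smul_le _ _).trans (mul_le_mul_of_nonneg_right (hc t ht) (norm_nonneg _))

theorem stmt4_general {u b : ℝ → E} {a T C : ℝ} (hu : ∀ t ∈ Ico a T, ‖u t‖ ≤ C)
    (hb : ContinuousOn b (Icc a T))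
    (hb' : ∀ t ∈ Ico a T, HasDerivWithinAt b (u t - ⟪b t, u t⟫ • b t) (Ici t) t)
    (ha : ‖b a‖ = 1) :
    ∀ t ∈ Icc a T, ‖b t‖ = 1 := by
  intro t ht
  obtain ⟨B, hB⟩ := isCompact_Icc.exists_bound_of_continuousOn hb
  have coeff_bound : ∀ τ ∈ Ico a T, ‖-2 * ⟪b τ, u τ⟫‖ ≤ 2 * (B * C) := fun τ hτ => by
    have hBτ : ‖b τ‖ ≤ B := hB τ (Ico_subset_Icc_self hτ)
    calc ‖-2 * ⟪b τ, u τ⟫‖ = 2 * ‖⟪b τ, u τ⟫‖ := by rw [norm_mul, norm_neg, Real.norm_ofNat]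
      _ ≤ 2 * (‖b τ‖ * ‖u τ‖) := by gcongr; exact norm_inner_le_norm _ _
      _ ≤ 2 * (B * C) := by
        gcongr
        · exact (norm_nonneg _).trans hBτ
        · exact hu τ hτ
  have defect_eq_zero : 1 - ‖b t‖ ^ 2 = 0 :=
    eq_zero_of_hasDerivWithinAt_smul_self (continuousOn_const.sub (hb.norm.pow 2))
      (fun τ hτ => hasDerivWithinAt_one_sub_norm_sq (hb' τ hτ)) coeff_bound (by simp [ha]) t ht
  exact (pow_eq_one_iff_of_nonneg (norm_nonneg _) two_ne_zero).1 (sub_eq_zero.1 defect_eq_zero).symm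

end InnerProductSpace

/-- The unit circle is invariant under the projected dynamics ḃ = P_b u. -/
theorem stmt4 (u : ℝ → EuclideanSpace ℝ (Fin 2)) (hu : Continuous u)
    (b : ℝ → EuclideanSpace ℝ (Fin 2))
    (hb : ∀ t ≥ (0 : ℝ), HasDerivAt b (proj (b t) (u t)) t)
    (h0 : ‖b 0‖ = 1) :
    ∀ t ≥ (0 : ℝ), ‖b t‖ = 1 := by
  intro T hT
  obtain ⟨C, hC⟩ := isCompact_Icc.exists_bound_of_continuousOn (hu.continuousOn (s := Icc 0 T))
  exact stmt4_general (fun t ht => hC t (Ico_subset_Icc_self ht))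
    (HasDerivAt.continuousOn fun t ht => hb t ht.1)
    (fun t ht => (hb t ht.1).hasDerivWithinAt) h0 T (right_mem_Icc.2 hT)
end

section
/- Let b* ∈ ℝ² be a unit vector and let b : [0, ∞) → ℝ² be differentiable with ḃ(t) = (I₂ − b(t) b(t)ᵀ) b* for all t ≥ 0, where b(0) is a unit vector with b(0) ≠ −b*. Then, with c := ¼‖b(0) + b*‖² > 0 (which equals cos²(α₀/2) for α₀ the angle between b(0) and b*), the bound ‖b(t) − b*‖² ≤ ‖b(0) − b*‖² e^{−2 c t} holds for all t ≥ 0; in particular b(t) → b* as t → ∞. Thus the equilibrium b = b* of ḃ = P_b b* is almost globally exponentially stable on the unit circle. -/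
open scoped RealInnerProductSpace
open Real Filter

/-!
Let `p` be a unit vector and `ḃ = P_b p`. The defect `1 - ‖b‖²` solves a linear homogeneous
equation, so the flow preserves the unit sphere. The height `u = ⟪b, p⟫` obeys the Riccati equation
`u̇ = 1 - u²`, so it never decreases, and neither does `‖b + p‖² = 2 (1 + u)`. On the sphere
`d/dt ‖b - p‖² = -½ ‖b + p‖² ‖b - p‖²`: the decay rate `½ ‖b + p‖²` is at least its initial value,
and Grönwall's inequality turns this into exponential decay.
-/

lemma eq_zero_of_hasDerivWithinAt_smul {F : Type*} [NormedAddCommGroup F] [NormedSpace ℝ F]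
    {k : ℝ → ℝ} {w : ℝ → F} {t₀ t₁ : ℝ} (hk : ContinuousOn k (Set.Icc t₀ t₁))
    (hw : ContinuousOn w (Set.Icc t₀ t₁))
    (hw' : ∀ t ∈ Set.Ico t₀ t₁, HasDerivWithinAt w (k t • w t) (Set.Ici t) t) (h₀ : w t₀ = 0) :
    ∀ t ∈ Set.Icc t₀ t₁, w t = 0 := by
  obtain ⟨K, hK⟩ := isCompact_Icc.exists_bound_of_continuousOn hk
  refine eq_zero_of_abs_deriv_le_mul_abs_self_of_eq_zero_right (K := K) hw hw' h₀ fun t ht => ?_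
  rw [norm_smul]
  exact mul_le_mul_of_nonneg_right (hK t (Set.Ico_subset_Icc_self ht)) (norm_nonneg _)

lemma le_mul_exp_of_deriv_right_le {f f' : ℝ → ℝ} {K t₀ t₁ : ℝ}
    (hf : ContinuousOn f (Set.Icc t₀ t₁))
    (hf' : ∀ t ∈ Set.Ico t₀ t₁, HasDerivWithinAt f (f' t) (Set.Ici t) t)
    (bound : ∀ t ∈ Set.Ico t₀ t₁, f' t ≤ K * f t) :
    ∀ t ∈ Set.Icc t₀ t₁, f t ≤ f t₀ * Real.exp (K * (t - t₀)) := by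
  intro t ht
  rw [← gronwallBound_ε0]
  exact le_gronwallBound_of_liminf_deriv_right_le hf
    (fun s hs _ hr => (hf' s hs).liminf_right_slope_le hr) le_rfl
    (fun s hs => by simpa only [add_zero] using bound s hs) t ht

lemma tendsto_of_norm_sub_sq_le_mul_exp {F : Type*} [SeminormedAddCommGroup F] {f : ℝ → F} {y : F}
    {C K : ℝ} (hK : K < 0) (hf : ∀ᶠ t in atTop, ‖f t - y‖ ^ 2 ≤ C * Real.exp (K * t)) :
    Tendsto f atTop (nhds y) := by
  have hexp : Tendsto (fun t : ℝ => C * Real.exp (K * t)) atTop (nhds 0) := by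
    simpa only [mul_zero, id] using
      (Real.tendsto_exp_comp_nhds_zero.mpr (tendsto_id.const_mul_atTop_of_neg hK)).const_mul C
  have hsq : Tendsto (fun t => ‖f t - y‖ ^ 2) atTop (nhds 0) :=
    squeeze_zero' (Eventually.of_forall fun _ => sq_nonneg _) hf hexp
  rw [tendsto_iff_norm_sub_tendsto_zero]
  simpa using hsq.sqrt

section ProjectionFlow

variable {E : Type*} [NormedAddCommGroup E] [InnerProductSpace ℝ E] {p : E} {b : ℝ → E}

/-- The curve `b` solves the projection flow `ḃ = P_b p` on `[0, ∞)`, where `P_b p = p - ⟪b, p⟫ b`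
is, for `‖b‖ = 1`, the projection of `p` onto the tangent space of the sphere at `b`. The
derivative is taken within `[0, ∞)`, hence is one-sided at `0`. -/
def IsProjectionFlow (p : E) (b : ℝ → E) : Prop :=
  ∀ t ≥ (0 : ℝ), HasDerivWithinAt b (p - ⟪b t, p⟫ • b t) (Set.Ici 0) t

namespace IsProjectionFlow

lemma continuousOn (hb : IsProjectionFlow p b) : ContinuousOn b (Set.Ici 0) :=
  fun t ht => (hb t ht).continuousWithinAt

lemma hasDerivWithinAt_inner (hb : IsProjectionFlow p b) {t : ℝ} (ht : 0 ≤ t) :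
    HasDerivWithinAt (fun s => ⟪b s, p⟫) (‖p‖ ^ 2 - ⟪b t, p⟫ ^ 2) (Set.Ici 0) t := by
  refine ((hb t ht).inner ℝ (hasDerivWithinAt_const t _ p)).congr_deriv ?_
  simp only [inner_zero_right, inner_sub_left, real_inner_smul_left, real_inner_self_eq_norm_sq]
  ring

lemma hasDerivWithinAt_one_sub_norm_sq (hb : IsProjectionFlow p b) {t : ℝ} (ht : 0 ≤ t) :
    HasDerivWithinAt (fun s => 1 - ‖b s‖ ^ 2) ((-2 * ⟪b t, p⟫) • (1 - ‖b t‖ ^ 2))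
      (Set.Ici 0) t := by
  refine ((hb t ht).norm_sq.const_sub 1).congr_deriv ?_
  simp only [inner_sub_right, real_inner_smul_right, real_inner_self_eq_norm_sq, smul_eq_mul]
  ring

lemma norm_eq_one (hb : IsProjectionFlow p b) (h0 : ‖b 0‖ = 1) {t : ℝ} (ht : 0 ≤ t) :
    ‖b t‖ = 1 := by
  have hcont : ContinuousOn b (Set.Icc 0 t) := hb.continuousOn.mono Set.Icc_subset_Ici_self
  have hdefect : 1 - ‖b t‖ ^ 2 = 0 :=
    eq_zero_of_hasDerivWithinAt_smul (k := fun s => -2 * ⟪b s, p⟫) (w := fun s => 1 - ‖b s‖ ^ 2)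
      (by fun_prop) (by fun_prop)
      (fun s hs => (hb.hasDerivWithinAt_one_sub_norm_sq hs.1).mono (Set.Ici_subset_Ici.mpr hs.1))
      (by simp [h0]) t ⟨ht, le_rfl⟩
  exact (pow_eq_one_iff_of_nonneg (norm_nonneg _) two_ne_zero).mp (sub_eq_zero.mp hdefect).symm

lemma monotoneOn_inner (hb : IsProjectionFlow p b) (h0 : ‖b 0‖ = 1) :
    MonotoneOn (fun t => ⟪b t, p⟫) (Set.Ici 0) := by
  refine monotoneOn_of_hasDerivWithinAt_nonneg (convex_Ici 0)
    (fun t ht => (hb.hasDerivWithinAt_inner ht).continuousWithinAt)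
    (fun t ht => (hb.hasDerivWithinAt_inner (interior_subset ht)).mono interior_subset)
    (fun t ht => sub_nonneg.mpr (sq_le_sq.mpr ?_))
  simpa [hb.norm_eq_one h0 (interior_subset ht)] using abs_real_inner_le_norm (b t) p

lemma monotoneOn_norm_add_sq (hb : IsProjectionFlow p b) (h0 : ‖b 0‖ = 1) :
    MonotoneOn (fun t => ‖b t + p‖ ^ 2) (Set.Ici 0) := by
  intro s hs t ht hst
  have hinner : ⟪b s, p⟫ ≤ ⟪b t, p⟫ := hb.monotoneOn_inner h0 hs ht hst
  simp only [norm_add_sq_real, hb.norm_eq_one h0 hs, hb.norm_eq_one h0 ht]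
  linarith

lemma hasDerivWithinAt_norm_sub_sq (hb : IsProjectionFlow p b) (hp : ‖p‖ = 1) (h0 : ‖b 0‖ = 1)
    {t : ℝ} (ht : 0 ≤ t) :
    HasDerivWithinAt (fun s => ‖b s - p‖ ^ 2) (-(1 / 2) * ‖b t + p‖ ^ 2 * ‖b t - p‖ ^ 2)
      (Set.Ici 0) t := by
  refine ((hb t ht).sub_const p).norm_sq.congr_deriv ?_
  simp only [norm_add_sq_real, norm_sub_sq_real, inner_sub_left, inner_sub_right,
    real_inner_smul_right, real_inner_self_eq_norm_sq, real_inner_comm (b t) p,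
    hb.norm_eq_one h0 ht, hp]
  ring

lemma norm_sub_sq_le (hb : IsProjectionFlow p b) (hp : ‖p‖ = 1) (h0 : ‖b 0‖ = 1) {t : ℝ}
    (ht : 0 ≤ t) :
    ‖b t - p‖ ^ 2 ≤ ‖b 0 - p‖ ^ 2 * Real.exp (-2 * ((1 / 4) * ‖b 0 + p‖ ^ 2) * t) := by
  have hcont : ContinuousOn b (Set.Icc 0 t) := hb.continuousOn.mono Set.Icc_subset_Ici_self
  have hrate : ∀ s ∈ Set.Ico 0 t, -(1 / 2) * ‖b s + p‖ ^ 2 * ‖b s - p‖ ^ 2 ≤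
      -2 * ((1 / 4) * ‖b 0 + p‖ ^ 2) * ‖b s - p‖ ^ 2 := fun s hs => by
    have hadd : ‖b 0 + p‖ ^ 2 ≤ ‖b s + p‖ ^ 2 :=
      hb.monotoneOn_norm_add_sq h0 Set.self_mem_Ici hs.1 hs.1
    exact mul_le_mul_of_nonneg_right (by linarith) (sq_nonneg _)
  simpa only [sub_zero] using le_mul_exp_of_deriv_right_le (by fun_prop)
    (fun s hs =>
      (hb.hasDerivWithinAt_norm_sub_sq hp h0 hs.1).mono (Set.Ici_subset_Ici.mpr hs.1))
    hrate t ⟨ht, le_rfl⟩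

end IsProjectionFlow

theorem stmt5_general (hp : ‖p‖ = 1) (hb : IsProjectionFlow p b) (h0 : ‖b 0‖ = 1)
    (hne : b 0 ≠ -p) :
    0 < (1 / 4) * ‖b 0 + p‖ ^ 2
    ∧ (∀ t ≥ (0 : ℝ),
        ‖b t - p‖ ^ 2 ≤ ‖b 0 - p‖ ^ 2 * Real.exp (-2 * ((1 / 4) * ‖b 0 + p‖ ^ 2) * t))
    ∧ Tendsto b atTop (nhds p) := by
  have hc : 0 < (1 / 4) * ‖b 0 + p‖ ^ 2 := by
    have : 0 < ‖b 0 + p‖ := norm_pos_iff.mpr fun h => hne (eq_neg_of_add_eq_zero_left h)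
    positivity
  have hdecay := fun t (ht : t ≥ (0 : ℝ)) => hb.norm_sub_sq_le hp h0 ht
  exact ⟨hc, hdecay, tendsto_of_norm_sub_sq_le_mul_exp (by linarith)
    ((eventually_ge_atTop 0).mono hdecay)⟩

end ProjectionFlow

/-- Almost-global exponential stability of b = b* for ḃ = P_b b*: if b(0) is a unit vector
with b(0) ≠ -b*, then with c = ¼‖b(0) + b*‖² > 0 we have
‖b(t) - b*‖² ≤ ‖b(0) - b*‖² e^{-2ct} for all t ≥ 0, and b(t) → b*. -/
theorem stmt5 (bs : EuclideanSpace ℝ (Fin 2)) (hbs : ‖bs‖ = 1)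
    (b : ℝ → EuclideanSpace ℝ (Fin 2))
    (hb : ∀ t ≥ (0 : ℝ), HasDerivAt b (proj (b t) bs) t)
    (h0 : ‖b 0‖ = 1) (hne : b 0 ≠ -bs) :
    (0 : ℝ) < (1 / 4) * ‖b 0 + bs‖ ^ 2
    ∧ (∀ t ≥ (0 : ℝ),
        ‖b t - bs‖ ^ 2 ≤ ‖b 0 - bs‖ ^ 2 * Real.exp (-2 * ((1 / 4) * ‖b 0 + bs‖ ^ 2) * t))
    ∧ Filter.Tendsto b Filter.atTop (nhds bs) :=
  stmt5_general hbs (fun t ht => (hb t ht).hasDerivWithinAt) h0 hne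
end

section
/- Let b* ∈ ℝ² be a unit vector and let b : [0, ∞) → ℝ² be differentiable with ḃ(t) = (I₂ − b(t) b(t)ᵀ) b* for all t ≥ 0 and ‖b(0)‖ = 1. Then the function t ↦ ⟨b(t), b*⟩ is nondecreasing on [0, ∞); equivalently, the angle between b(t) and b* is nonincreasing in t. -/
open scoped RealInnerProductSpace
open Real Filter

/-! The equation `db/dt = v - ⟪b, v⟫ b` closes up on `u = ⟪b, v⟫`, which satisfies the Riccati
equation `du/dt = ‖v‖² - u²`. The right-hand side `w = ‖v‖² - u²` in turn satisfies the linear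
equation `dw/dt = -2 u w`, so it is its initial value times an exponential and keeps its sign. On
the unit circle `w ≥ 0` by Cauchy–Schwarz, hence `du/dt = w ≥ 0` at all times. -/

section LinearODE

variable {E : Type*} [NormedAddCommGroup E] [NormedSpace ℝ E]

theorem eq_exp_integral_smul_of_hasDerivWithinAt {k : ℝ → ℝ} {f : ℝ → E} {a b : ℝ} (hab : a ≤ b)
    (hk : ContinuousOn k (Set.Icc a b))
    (hf : ∀ t ∈ Set.Icc a b, HasDerivWithinAt f (k t • f t) (Set.Icc a b) t) :
    f b = exp (∫ s in a..b, k s) • f a := by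
  set K : ℝ → ℝ := fun t => ∫ s in a..t, k s
  have hK : ∀ t ∈ Set.Icc a b, HasDerivWithinAt K (k t) (Set.Icc a b) t := fun t ht =>
    have : Fact (t ∈ Set.Icc a b) := ⟨ht⟩
    intervalIntegral.integral_hasDerivWithinAt_right
      ((hk.mono (Set.Icc_subset_Icc_right ht.2)).intervalIntegrable_of_Icc ht.1)
      (hk.stronglyMeasurableAtFilter_nhdsWithin measurableSet_Icc t) (hk t ht)
  have hderiv : ∀ t ∈ Set.Icc a b,
      HasDerivWithinAt (fun t => exp (-K t) • f t) 0 (Set.Icc a b) t := fun t ht =>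
    ((hK t ht).fun_neg.exp.fun_smul (hf t ht)).congr_deriv (by module)
  have hconst : exp (-K b) • f b = exp (-K a) • f a :=
    constant_of_has_deriv_right_zero (fun t ht => (hderiv t ht).continuousWithinAt)
      (fun t ht => (hderiv t (Set.Ico_subset_Icc_self ht)).mono_of_mem_nhdsWithin
        (Icc_mem_nhdsGE_of_mem ht)) b (Set.right_mem_Icc.2 hab)
  calc
    f b = exp (K b) • exp (-K b) • f b := by
      rw [smul_smul, ← exp_add, add_neg_cancel, exp_zero, one_smul]
    _ = exp (K b) • exp (-K a) • f a := by rw [hconst]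
    _ = exp (K b) • f a := by
      rw [show K a = 0 from intervalIntegral.integral_same, neg_zero, exp_zero, one_smul]

end LinearODE

section Riccati

variable {u : ℝ → ℝ} {a c : ℝ}

theorem sq_le_of_hasDerivWithinAt_riccati
    (hu : ∀ t ∈ Set.Ici a, HasDerivWithinAt u (c - u t ^ 2) (Set.Ici a) t) (ha : u a ^ 2 ≤ c)
    {t : ℝ} (ht : a ≤ t) : u t ^ 2 ≤ c := by
  have hu_cont : ContinuousOn u (Set.Icc a t) := fun s hs =>
    (hu s hs.1).continuousWithinAt.mono Set.Icc_subset_Ici_self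
  have hw : ∀ s ∈ Set.Icc a t, HasDerivWithinAt (fun s => c - u s ^ 2)
      ((-2 * u s) • (c - u s ^ 2)) (Set.Icc a t) s := fun s hs =>
    ((((hu s hs.1).mono Set.Icc_subset_Ici_self).fun_pow 2).const_sub c).congr_deriv
      (by simp only [smul_eq_mul]; push_cast; ring)
  have hsol : c - u t ^ 2 = exp (∫ s in a..t, -2 * u s) • (c - u a ^ 2) :=
    eq_exp_integral_smul_of_hasDerivWithinAt ht (continuousOn_const.mul hu_cont) hw
  exact sub_nonneg.1 (hsol ▸ smul_nonneg (exp_nonneg _) (sub_nonneg.2 ha))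

theorem monotoneOn_of_hasDerivWithinAt_riccati
    (hu : ∀ t ∈ Set.Ici a, HasDerivWithinAt u (c - u t ^ 2) (Set.Ici a) t) (ha : u a ^ 2 ≤ c) :
    MonotoneOn u (Set.Ici a) :=
  monotoneOn_of_hasDerivWithinAt_nonneg (convex_Ici a) (fun t ht => (hu t ht).continuousWithinAt)
    (fun t ht => (hu t (interior_subset ht)).mono interior_subset)
    fun _ ht => sub_nonneg.2 (sq_le_of_hasDerivWithinAt_riccati hu ha (interior_subset ht))

end Riccati

section ProjectedFlow

variable {E : Type*} [NormedAddCommGroup E] [InnerProductSpace ℝ E] {v : E} {b : ℝ → E}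

theorem hasDerivWithinAt_inner_riccati {s : Set ℝ} {t : ℝ}
    (hb : HasDerivWithinAt b (v - ⟪b t, v⟫ • b t) s t) :
    HasDerivWithinAt (fun t => ⟪b t, v⟫) (‖v‖ ^ 2 - ⟪b t, v⟫ ^ 2) s t :=
  (hb.inner ℝ (hasDerivWithinAt_const t s v)).congr_deriv <| by
    rw [inner_zero_right, zero_add, inner_sub_left, real_inner_smul_left,
      real_inner_self_eq_norm_sq, sq ⟪b t, v⟫]

theorem stmt6_general {a : ℝ}
    (hb : ∀ t ∈ Set.Ici a, HasDerivWithinAt b (v - ⟪b t, v⟫ • b t) (Set.Ici a) t)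
    (ha : |⟪b a, v⟫| ≤ ‖v‖) :
    MonotoneOn (fun t => ⟪b t, v⟫) (Set.Ici a) :=
  monotoneOn_of_hasDerivWithinAt_riccati (fun t ht => hasDerivWithinAt_inner_riccati (hb t ht))
    (sq_le_sq.2 (ha.trans_eq (abs_norm v).symm))

end ProjectedFlow

/-- Along ḃ = P_b b* starting on the unit circle, t ↦ ⟨b(t), b*⟩ is nondecreasing on [0, ∞). -/
theorem stmt6 (bs : EuclideanSpace ℝ (Fin 2)) (hbs : ‖bs‖ = 1)
    (b : ℝ → EuclideanSpace ℝ (Fin 2))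
    (hb : ∀ t ≥ (0 : ℝ), HasDerivAt b (proj (b t) bs) t)
    (h0 : ‖b 0‖ = 1) :
    MonotoneOn (fun t => ⟪b t, bs⟫) (Set.Ici (0 : ℝ)) := by
  have h_inner : |⟪b 0, bs⟫| ≤ ‖bs‖ := by
    simpa only [h0, one_mul] using abs_real_inner_le_norm (b 0) bs
  exact stmt6_general (fun t ht => (hb t ht).hasDerivWithinAt) h_inner
end

section
/- Let b* ∈ ℝ² be a unit vector. The equilibrium −b* of the dynamics ḃ = (I₂ − b bᵀ) b* on the unit circle is unstable: for every δ > 0 there exists a unit vector b₀ with 0 < ‖b₀ + b*‖ < δ such that every differentiable solution b : [0, ∞) → ℝ² of ḃ(t) = (I₂ − b(t) b(t)ᵀ) b* with b(0) = b₀ satisfies ‖b(t) + b*‖ > 1 for all sufficiently large t. -/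
/-!
For unit vectors `b` and `b*`, the height `x = ⟨b*, b⟩` of a solution solves the scalar Riccati
equation `x' = 1 - x²`, along which `(1 - x) / (1 + x)` decays like `exp (-2t)`. Hence every
solution with `x 0 > -1`, that is, every one not starting at `-b*`, has `x → 1`. Since `‖b‖² - 1`
solves a homogeneous linear equation, `b` stays on the sphere, and `‖b - b*‖² = 2 - 2x → 0`.
Unit vectors `≠ -b*` exist arbitrarily near `-b*` because a connected sphere has no isolated points.
-/

open scoped RealInnerProductSpace
open Real Filter

open Set Topology

theorem eqOn_zero_of_isIntegralCurveOn_smul {F : Type*} [NormedAddCommGroup F] [NormedSpace ℝ F]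
    {f : ℝ → F} {a : ℝ → ℝ} {t₀ : ℝ} (ha : ContinuousOn a (Ici t₀))
    (hf : IsIntegralCurveOn f (fun t y ↦ a t • y) (Ici t₀)) (hf₀ : f t₀ = 0) :
    EqOn f 0 (Ici t₀) := by
  intro t ht
  obtain ⟨K, hK⟩ := isCompact_Icc.exists_bound_of_continuousOn
    (ha.mono (Icc_subset_Ici_self : Icc t₀ t ⊆ _))
  have hderiv_le : ∀ s ∈ Ico t₀ t, ‖a s • f s‖ ≤ K * ‖f s‖ := fun s hs ↦ by
    rw [norm_smul]
    gcongr
    exact hK s (Ico_subset_Icc_self hs)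
  exact eq_zero_of_abs_deriv_le_mul_abs_self_of_eq_zero_right
    (hf.continuousOn.mono Icc_subset_Ici_self)
    (fun s hs ↦ (hf s hs.1).mono (Ici_subset_Ici.2 hs.1)) hf₀ hderiv_le t ⟨ht, le_rfl⟩

theorem exists_norm_eq_one_ne_norm_sub_lt {E : Type*} [NormedAddCommGroup E] [NormedSpace ℝ E]
    (hE : 1 < Module.rank ℝ E) {u : E} (hu : ‖u‖ = 1) {δ : ℝ} (hδ : 0 < δ) :
    ∃ w : E, ‖w‖ = 1 ∧ w ≠ u ∧ ‖w - u‖ < δ := by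
  have hu_mem : u ∈ Metric.sphere (0 : E) 1 := by simpa using hu
  have hnontrivial : (Metric.sphere (0 : E) 1).Nontrivial :=
    ⟨u, hu_mem, -u, by simpa using hu,
      Subtype.coe_injective.ne (ne_neg_of_mem_unit_sphere ℝ ⟨u, hu_mem⟩)⟩
  have hacc : AccPt u (𝓟 (Metric.sphere (0 : E) 1)) :=
    (isPreconnected_sphere hE 0 1).preperfect_of_nontrivial hnontrivial u hu_mem
  obtain ⟨w, ⟨hwu, hw⟩, hne⟩ := accPt_iff_nhds.1 hacc _ (Metric.ball_mem_nhds u hδ)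
  exact ⟨w, mem_sphere_zero_iff_norm.1 hw, hne, mem_ball_iff_norm.1 hwu⟩

theorem eventually_lt_norm_add_of_tendsto {ι E : Type*} [NormedAddCommGroup E] [NormedSpace ℝ E]
    {l : Filter ι} {f : ι → E} {v : E} {r : ℝ} (hf : Tendsto f l (𝓝 v)) (hr : r < 2 * ‖v‖) :
    ∀ᶠ i in l, r < ‖f i + v‖ := by
  have hdouble : ‖v + v‖ = 2 * ‖v‖ := by rw [← two_smul ℝ v, norm_smul, norm_two]
  exact (hf.add_const v).norm.eventually_const_lt (hdouble ▸ hr)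

section Riccati

variable {x : ℝ → ℝ}

-- Cross-multiplied form of `(1 - x t) / (1 + x t) = exp (-2t) (1 - x 0) / (1 + x 0)`, because
-- `1 + x t ≠ 0` is not known beforehand.
theorem one_sub_mul_one_add_eq_of_isIntegralCurveOn_one_sub_sq
    (hx : IsIntegralCurveOn x (fun _ y ↦ 1 - y ^ 2) (Ici 0)) {t : ℝ} (ht : 0 ≤ t) :
    (1 - x 0) * (1 + x t) = (1 + x 0) * (1 - x t) * exp (2 * t) := by
  let G : ℝ → ℝ := fun s ↦ (1 - x 0) * (1 + x s) - (1 + x 0) * (1 - x s) * exp (2 * s)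
  have hG : IsIntegralCurveOn G (fun s y ↦ (1 - x s) • y) (Ici 0) := fun s hs ↦ by
    have hexp : HasDerivWithinAt (fun r ↦ exp (2 * r)) (exp (2 * s) * (2 * 1)) (Ici 0) s :=
      ((hasDerivAt_id s).const_mul 2).exp.hasDerivWithinAt
    refine ((((hx s hs).const_add 1).const_mul (1 - x 0)).sub
      ((((hx s hs).const_sub 1).const_mul (1 + x 0)).mul hexp)).congr_deriv ?_
    simp only [G, smul_eq_mul]
    ring
  have hG₀ : G 0 = 0 := by
    simp only [G, mul_zero, exp_zero]
    ring
  exact sub_eq_zero.1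
    (eqOn_zero_of_isIntegralCurveOn_smul (continuousOn_const.sub hx.continuousOn) hG hG₀ ht)

theorem tendsto_one_of_isIntegralCurveOn_one_sub_sq
    (hx : IsIntegralCurveOn x (fun _ y ↦ 1 - y ^ 2) (Ici 0)) (hx₀ : -1 < x 0) :
    Tendsto x atTop (𝓝 1) := by
  let D : ℝ → ℝ := fun t ↦ (1 + x 0) * exp (2 * t) + (1 - x 0)
  have hD : Tendsto D atTop atTop :=
    tendsto_atTop_add_const_right _ _ <| (tendsto_exp_atTop.comp
      (tendsto_id.const_mul_atTop two_pos)).const_mul_atTop (by linarith)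
  have hx_eq : ∀ᶠ t in atTop, 1 - 2 * (1 - x 0) / D t = x t := by
    filter_upwards [eventually_ge_atTop 0, hD.eventually_gt_atTop 0] with t ht hDt
    rw [sub_eq_iff_eq_add, ← sub_eq_iff_eq_add', eq_div_iff hDt.ne']
    linear_combination -one_sub_mul_one_add_eq_of_isIntegralCurveOn_one_sub_sq hx ht
  have hlim : Tendsto (fun t ↦ 1 - 2 * (1 - x 0) / D t) atTop (𝓝 (1 - 0)) :=
    (hD.const_div_atTop _).const_sub 1
  exact (sub_zero (1 : ℝ) ▸ hlim).congr' hx_eq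

end Riccati

section Alignment

variable {E : Type*} [NormedAddCommGroup E] [InnerProductSpace ℝ E] {v : E} {b : ℝ → E}

/-- The vector field `b ↦ (I - b bᵀ) v`, whose restriction to the unit sphere is the tangential part
of `v`. It is defined for all `b`, so that being a solution does not presuppose `‖b‖ = 1`;
in the plane, `alignField v b` unfolds to `proj b v`. -/
def alignField (v b : E) : E :=
  v - ⟪b, v⟫ • b

theorem isIntegralCurveOn_inner_of_alignField {s : Set ℝ} (hv : ‖v‖ = 1)
    (hb : IsIntegralCurveOn b (fun _ ↦ alignField v) s) :
    IsIntegralCurveOn (fun t ↦ ⟪v, b t⟫) (fun _ y ↦ 1 - y ^ 2) s := fun t ht ↦ by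
  refine ((hasDerivWithinAt_const t s v).inner ℝ (hb t ht)).congr_deriv ?_
  simp only [alignField, inner_sub_right, inner_smul_right, real_inner_self_eq_norm_sq, hv,
    real_inner_comm v (b t), inner_zero_left]
  ring

theorem norm_eq_one_of_isIntegralCurveOn_alignField
    (hb : IsIntegralCurveOn b (fun _ ↦ alignField v) (Ici 0)) (hb₀ : ‖b 0‖ = 1) {t : ℝ}
    (ht : 0 ≤ t) : ‖b t‖ = 1 := by
  have hdefect : IsIntegralCurveOn (fun s ↦ ‖b s‖ ^ 2 - 1) (fun s y ↦ (-2 * ⟪b s, v⟫) • y)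
      (Ici 0) := fun s hs ↦ by
    refine ((hb s hs).norm_sq.sub_const 1).congr_deriv ?_
    simp only [alignField, inner_sub_right, inner_smul_right, real_inner_self_eq_norm_sq,
      smul_eq_mul]
    ring
  have hcoeff : ContinuousOn (fun s ↦ -2 * ⟪b s, v⟫) (Ici 0) :=
    continuousOn_const.mul (hb.continuousOn.inner (𝕜 := ℝ) continuousOn_const)
  have hsq : ‖b t‖ ^ 2 - 1 = 0 :=
    eqOn_zero_of_isIntegralCurveOn_smul hcoeff hdefect (by simp [hb₀]) ht
  exact (pow_eq_one_iff_of_nonneg (norm_nonneg _) two_ne_zero).1 (sub_eq_zero.1 hsq)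

theorem tendsto_of_isIntegralCurveOn_alignField (hv : ‖v‖ = 1)
    (hb : IsIntegralCurveOn b (fun _ ↦ alignField v) (Ici 0)) (hb₀ : ‖b 0‖ = 1)
    (hne : b 0 ≠ -v) : Tendsto b atTop (𝓝 v) := by
  have hinner₀ : -1 < ⟪v, b 0⟫ := by
    have := (inner_lt_one_iff_real_of_norm_eq_one (norm_neg v ▸ hv) hb₀).2 hne.symm
    rw [inner_neg_left] at this
    linarith
  have hinner : Tendsto (fun t ↦ ⟪v, b t⟫) atTop (𝓝 1) :=
    tendsto_one_of_isIntegralCurveOn_one_sub_sq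
      (isIntegralCurveOn_inner_of_alignField hv hb) hinner₀
  have hdist : ∀ᶠ t in atTop, √(2 - 2 * ⟪v, b t⟫) = ‖b t - v‖ := by
    filter_upwards [eventually_ge_atTop 0] with t ht
    rw [← sqrt_sq (norm_nonneg (b t - v)), norm_sub_sq_real, hv,
      norm_eq_one_of_isIntegralCurveOn_alignField hb hb₀ ht, real_inner_comm]
    ring_nf
  rw [tendsto_iff_norm_sub_tendsto_zero]
  refine Tendsto.congr' hdist ?_
  simpa using ((hinner.const_mul 2).const_sub 2).sqrt

end Alignment

theorem stmt7_general {E : Type*} [NormedAddCommGroup E] [InnerProductSpace ℝ E]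
    (hE : 1 < Module.rank ℝ E) {v : E} (hv : ‖v‖ = 1) {δ : ℝ} (hδ : 0 < δ) :
    ∃ b₀ : E, ‖b₀‖ = 1 ∧ 0 < ‖b₀ + v‖ ∧ ‖b₀ + v‖ < δ ∧
      ∀ b : ℝ → E, IsIntegralCurveOn b (fun _ ↦ alignField v) (Ici 0) → b 0 = b₀ →
        Tendsto b atTop (𝓝 v) := by
  obtain ⟨b₀, hb₀, hne, hlt⟩ := exists_norm_eq_one_ne_norm_sub_lt hE (norm_neg v ▸ hv) hδ
  rw [sub_neg_eq_add] at hlt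
  refine ⟨b₀, hb₀, norm_pos_iff.2 (mt eq_neg_of_add_eq_zero_left hne), hlt, ?_⟩
  rintro b hb rfl
  exact tendsto_of_isIntegralCurveOn_alignField hv hb hb₀ hne

/-- The equilibrium -b* of ḃ = P_b b* on the unit circle is unstable: arbitrarily close to
-b* there are unit initial conditions whose solutions eventually leave the unit ball
around -b*. -/
theorem stmt7 (bs : EuclideanSpace ℝ (Fin 2)) (hbs : ‖bs‖ = 1) :
    ∀ δ > (0 : ℝ), ∃ b₀ : EuclideanSpace ℝ (Fin 2), ‖b₀‖ = 1
      ∧ 0 < ‖b₀ + bs‖ ∧ ‖b₀ + bs‖ < δ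
      ∧ ∀ b : ℝ → EuclideanSpace ℝ (Fin 2),
          (∀ t ≥ (0 : ℝ), HasDerivAt b (proj (b t) bs) t) → b 0 = b₀ →
          ∃ T : ℝ, ∀ t ≥ T, ‖b t + bs‖ > 1 := by
  intro δ hδ
  have hrank : 1 < Module.rank ℝ (EuclideanSpace ℝ (Fin 2)) :=
    Module.lt_rank_of_lt_finrank (by simp)
  obtain ⟨b₀, hb₀, hpos, hlt, hconv⟩ := stmt7_general hrank hbs hδ
  refine ⟨b₀, hb₀, hpos, hlt, fun b hb h0 ↦ eventually_atTop.1 ?_⟩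
  have hlim : Tendsto b atTop (𝓝 bs) := hconv b (fun t ht ↦ (hb t ht).hasDerivWithinAt) h0
  exact eventually_lt_norm_add_of_tendsto hlim (by rw [hbs]; norm_num)
end

section
/- Let α ∈ ℝ, let b₁, b₂, b₁* ∈ ℝ² with b₂ and b₁* unit vectors, and set b₂* := R(α) b₁*. Then ⟨b₂ − b₂*, P_{b₂} R(α) b₁⟩ ≤ −‖P_{b₂} b₂*‖² + ‖P_{b₂} b₂*‖ · ‖b₁ − b₁*‖, where P_{b₂} := I₂ − b₂ b₂ᵀ. -/
open scoped RealInnerProductSpace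
open Real Filter MeasureTheory

/-- The counterclockwise rotation of the plane through angle α. -/
noncomputable def rot (α : ℝ) (v : EuclideanSpace ℝ (Fin 2)) : EuclideanSpace ℝ (Fin 2) :=
  (WithLp.equiv 2 (Fin 2 → ℝ)).symm
    ![Real.cos α * v 0 - Real.sin α * v 1, Real.sin α * v 0 + Real.cos α * v 1]

/-- The unit vector at angle θ: (cos θ, sin θ). -/
noncomputable def dir (θ : ℝ) : EuclideanSpace ℝ (Fin 2) :=
  (WithLp.equiv 2 (Fin 2 → ℝ)).symm ![Real.cos θ, Real.sin θ]

/-!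
Since `b₂` is orthogonal to the range of the self-adjoint projection `P = P_{b₂}`, the left-hand
side equals `-⟪P b₂*, R(α) b₁⟫`. Splitting `R(α) b₁ = b₂* + R(α) (b₁ - b₁*)` produces the term
`-‖P b₂*‖²`, and the Cauchy–Schwarz inequality bounds the rest, because `R(α)` is an isometry.
-/

section OrthogonalProjection

variable {E : Type*} [NormedAddCommGroup E] [InnerProductSpace ℝ E]
  (K : Submodule ℝ E) [K.HasOrthogonalProjection]

lemma real_inner_starProjection_self (w : E) :
    ⟪K.starProjection w, w⟫ = ‖K.starProjection w‖ ^ 2 :=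
  K.re_inner_starProjection_eq_normSq w

lemma inner_sub_starProjection_of_mem_orthogonal {u : E} (hu : u ∈ Kᗮ) (w x : E) :
    ⟪u - w, K.starProjection x⟫ =
      -‖K.starProjection w‖ ^ 2 + ⟪K.starProjection w, w - x⟫ := by
  have hux : ⟪u, K.starProjection x⟫ = 0 :=
    K.inner_left_of_mem_orthogonal (K.starProjection_apply_mem x) hu
  calc ⟪u - w, K.starProjection x⟫
      = -⟪K.starProjection w, x⟫ := by
        rw [inner_sub_left, hux, zero_sub, K.inner_starProjection_left_eq_right]
    _ = -‖K.starProjection w‖ ^ 2 + ⟪K.starProjection w, w - x⟫ := by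
        rw [inner_sub_right, real_inner_starProjection_self]
        ring

lemma inner_sub_starProjection_le_of_mem_orthogonal {u : E} (hu : u ∈ Kᗮ) (w x : E) :
    ⟪u - w, K.starProjection x⟫ ≤
      -‖K.starProjection w‖ ^ 2 + ‖K.starProjection w‖ * dist x w := by
  rw [inner_sub_starProjection_of_mem_orthogonal K hu, dist_comm, dist_eq_norm]
  gcongr
  exact real_inner_le_norm _ _

theorem stmt8_general {X : Type*} [PseudoMetricSpace X] {f : X → E} (hf : LipschitzWith 1 f)
    {u : E} (hu : u ∈ Kᗮ) (x y : X) :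
    ⟪u - f y, K.starProjection (f x)⟫ ≤
      -‖K.starProjection (f y)‖ ^ 2 + ‖K.starProjection (f y)‖ * dist x y := by
  have hxy : dist (f x) (f y) ≤ dist x y := by
    simpa only [NNReal.coe_one, one_mul] using hf.dist_le_mul x y
  grw [inner_sub_starProjection_le_of_mem_orthogonal K hu, hxy]

end OrthogonalProjection

lemma proj_eq_starProjection_orthogonal_span_singleton {b : EuclideanSpace ℝ (Fin 2)}
    (hb : ‖b‖ = 1) (v : EuclideanSpace ℝ (Fin 2)) :
    proj b v = (ℝ ∙ b)ᗮ.starProjection v := by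
  rw [proj, Submodule.starProjection_orthogonal_val, Submodule.starProjection_unit_singleton ℝ hb]

lemma isometry_rot (α : ℝ) : Isometry (rot α) := by
  refine Isometry.of_dist_eq fun v w => ?_
  rw [EuclideanSpace.dist_eq, EuclideanSpace.dist_eq]
  congr 1
  simp only [rot, WithLp.equiv_symm_apply, Fin.sum_univ_two, Real.dist_eq, sq_abs,
    Matrix.cons_val_zero, Matrix.cons_val_one]
  linear_combination ((v 0 - w 0) ^ 2 + (v 1 - w 1) ^ 2) * Real.sin_sq_add_cos_sq α

/-- With b₂* = R(α)b₁*, for unit vectors b₂, b₁*: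
⟨b₂ - b₂*, P_{b₂} R(α) b₁⟩ ≤ -‖P_{b₂} b₂*‖² + ‖P_{b₂} b₂*‖ ‖b₁ - b₁*‖. -/
theorem stmt8 (α : ℝ) (b1 b2 b1s : EuclideanSpace ℝ (Fin 2))
    (hb2 : ‖b2‖ = 1) (hb1s : ‖b1s‖ = 1) :
    ⟪b2 - rot α b1s, proj b2 (rot α b1)⟫ ≤
      -‖proj b2 (rot α b1s)‖ ^ 2 + ‖proj b2 (rot α b1s)‖ * ‖b1 - b1s‖ := by
  simpa only [proj_eq_starProjection_orthogonal_span_singleton hb2, dist_eq_norm] using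
    stmt8_general (ℝ ∙ b2)ᗮ (isometry_rot α).lipschitz
      ((ℝ ∙ b2).le_orthogonal_orthogonal (Submodule.mem_span_singleton_self b2)) b1 b1s
end

section
/- Let b₁* ∈ ℝ² be a unit vector, let α ∈ ℝ, and set b₂* := R(α) b₁*. Consider the cascade system on the torus: ḃ₁ = P_{b₁} b₁*, ḃ₂ = P_{b₂} R(α) b₁. Then for (Lebesgue-)almost every pair of initial angles (θ₁, θ₂) ∈ ℝ², every differentiable solution (b₁, b₂) : [0, ∞) → ℝ² × ℝ² of this system with b₁(0) = (cos θ₁, sin θ₁) and b₂(0) = (cos θ₂, sin θ₂) satisfies b₁(t) → b₁* and b₂(t) → b₂* = R(α) b₁* as t → ∞. That is, the equilibrium (b₁*, R(α)b₁*) is almost globally asymptotically attractive. -/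
open scoped RealInnerProductSpace
open Real Filter MeasureTheory

/-!
A unit vector `b` driven by `ḃ = P_b v` stays on the unit sphere. If `v → u` with `‖u‖ = 1`, then
`x = ⟪b, u⟫` satisfies `x' ≥ 1 - x² - o(1)`, so `b → u` or `b → -u`. Two headings `b`, `b'` with the
same drive satisfy `(1 - ⟪b, b'⟫)' = -(⟪b, v⟫ + ⟪b', v⟫) (1 - ⟪b, b'⟫)`; if both converge to `-u`,
the rate tends to `2` while `1 - ⟪b, b'⟫` tends to `0`, which forces `b = b'`.

Hence the first heading of the cascade converges to `u` unless it starts at `-u`, and above each of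
its other initial values there is at most one exceptional initial value of the second heading. For
Fubini one still has to know that the set of exceptional pairs is measurable. This is obtained
without any existence theory: in stereographic projection from `-u` the first heading is
`q(t) = e⁻ᵗ q(0)`, so of two exceptional solutions on the same side of the axis through `u` the one
further out runs through the initial value of the other. Countably many exceptional trajectories
therefore fill the exceptional set, which makes it σ-compact.
-/

open Set Topology

section Scalar

lemma eq_exp_integral_smul_of_hasDerivAt {E : Type*} [NormedAddCommGroup E] [NormedSpace ℝ E]
    {a t : ℝ} {g : ℝ → ℝ} {y : ℝ → E} (hg : ContinuousOn g (Ici a))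
    (hy : ∀ t ≥ a, HasDerivAt y (g t • y t) t) (ht : a ≤ t) :
    y t = Real.exp (∫ s in a..t, g s) • y a := by
  have hext : Continuous fun s => g (max a s) :=
    hg.comp_continuous (by fun_prop) fun s => le_max_left a s
  set G : ℝ → ℝ := fun t => ∫ s in a..t, g (max a s)
  have hG (s : ℝ) : HasDerivAt G (g (max a s)) s := (hext.integral_hasStrictDerivAt a s).hasDerivAt
  have hGt : G t = ∫ s in a..t, g s :=
    intervalIntegral.integral_congr fun s hs => by
      rw [uIcc_of_le ht] at hs
      simp only [max_eq_right hs.1]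
  have hconst : ∀ s ≥ a, HasDerivAt (fun t => Real.exp (-G t) • y t) 0 s := fun s hs => by
    refine ((hG s).neg.exp.smul (hy s hs)).congr_deriv ?_
    rw [max_eq_right hs]
    module
  have heq : Real.exp (-G t) • y t = y a := by
    simpa [G] using constant_of_has_deriv_right_zero
      (fun s hs => (hconst s hs.1).continuousAt.continuousWithinAt)
      (fun s hs => (hconst s hs.1).hasDerivWithinAt) t ⟨ht, le_rfl⟩
  rw [← hGt, ← heq, smul_smul, ← Real.exp_add, add_neg_cancel, Real.exp_zero, one_smul]

lemma eventually_lt_or_eventually_le_of_hasDerivAt {x x' : ℝ → ℝ} {a b c : ℝ} (hab : a ≤ b)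
    (hc : 0 < c) (hx : ∀ᶠ t in atTop, HasDerivAt x (x' t) t)
    (hx' : ∀ᶠ t in atTop, x t ∈ Icc a b → c ≤ x' t) :
    (∀ᶠ t in atTop, x t < a) ∨ ∀ᶠ t in atTop, b ≤ x t := by
  obtain ⟨T, hT⟩ := eventually_atTop.1 (hx.and hx')
  refine or_iff_not_imp_left.2 fun hlt => ?_
  obtain ⟨t₀, ht₀, ha⟩ : ∃ t₀ ≥ T, a ≤ x t₀ := by
    contrapose! hlt
    exact eventually_atTop.2 ⟨T, hlt⟩
  have barrier {m r s₀ s₁ s : ℝ} (hs₀ : t₀ ≤ s₀) (hm : m < c) (hr : r ≤ x s₀)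
      (hline : ∀ s ∈ Ico s₀ s₁, r + m * (s - s₀) ∈ Icc a b) (hs : s ∈ Icc s₀ s₁) :
      r + m * (s - s₀) ≤ x s :=
    image_le_of_deriv_right_lt_deriv_boundary' (f := fun s => r + m * (s - s₀)) (f' := fun _ => m)
      (by fun_prop)
      (fun s _ => ((((hasDerivAt_id s).sub_const s₀).const_mul m).const_add r).hasDerivWithinAt
        |>.congr_deriv (mul_one m))
      (by simpa using hr)
      (fun s hs => (hT s (ht₀.trans (hs₀.trans hs.1))).1.continuousAt.continuousWithinAt)
      (fun s hs => (hT s (ht₀.trans (hs₀.trans hs.1))).1.hasDerivWithinAt)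
      (fun s hs heq => hm.trans_le <|
        (hT s (ht₀.trans (hs₀.trans hs.1))).2 (heq ▸ hline s hs)) hs
  set t₁ := t₀ + 2 / c * (b - a)
  have ht₁ : t₀ ≤ t₁ := le_add_of_nonneg_right (mul_nonneg (by positivity) (sub_nonneg.2 hab))
  have hslope : c / 2 * (t₁ - t₀) = b - a := by
    simp only [t₁]
    field_simp
    ring
  have hreach : b ≤ x t₁ := by
    have := barrier (m := c / 2) le_rfl (half_lt_self hc) ha
      (fun s hs => ⟨by nlinarith [hs.1], by nlinarith [hs.2]⟩) (right_mem_Icc.2 ht₁)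
    linarith
  filter_upwards [eventually_ge_atTop t₁] with t ht
  simpa using barrier (m := 0) ht₁ hc hreach (fun s _ => by simpa using hab) (right_mem_Icc.2 ht)

lemma tendsto_one_or_tendsto_neg_one_of_hasDerivAt {x x' : ℝ → ℝ}
    (hx : ∀ᶠ t in atTop, HasDerivAt x (x' t) t) (hbound : ∀ᶠ t in atTop, |x t| ≤ 1)
    (hx' : ∀ ε > 0, ∀ᶠ t in atTop, 1 - x t ^ 2 - ε ≤ x' t) :
    Tendsto x atTop (𝓝 1) ∨ Tendsto x atTop (𝓝 (-1)) := by
  have alternative : ∀ δ ∈ Ioo (0 : ℝ) 1,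
      (∀ᶠ t in atTop, x t < -1 + δ) ∨ ∀ᶠ t in atTop, 1 - δ ≤ x t := fun δ hδ => by
    refine eventually_lt_or_eventually_le_of_hasDerivAt (by linarith [hδ.2]) (half_pos hδ.1) hx ?_
    filter_upwards [hx' (δ / 2) (half_pos hδ.1)] with t ht hmem
    nlinarith [hmem.1, hmem.2, hδ.1, hδ.2]
  by_cases hone : ∀ δ ∈ Ioo (0 : ℝ) 1, ∀ᶠ t in atTop, 1 - δ ≤ x t
  · refine Or.inl (tendsto_order.2 ⟨fun r hr => ?_, fun r hr => ?_⟩)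
    · have hδ : min ((1 - r) / 2) (1 / 2) ∈ Ioo (0 : ℝ) 1 :=
        ⟨lt_min (by linarith) (by norm_num), (min_le_right _ _).trans_lt (by norm_num)⟩
      filter_upwards [hone _ hδ] with t ht
      linarith [min_le_left ((1 - r) / 2) (1 / 2 : ℝ)]
    · filter_upwards [hbound] with t ht using (abs_le.1 ht).2.trans_lt hr
  · push Not at hone
    obtain ⟨δ₀, hδ₀, hnot⟩ := hone
    refine Or.inr (tendsto_order.2 ⟨fun r hr => ?_, fun r hr => ?_⟩)
    · filter_upwards [hbound] with t ht using hr.trans_le (abs_le.1 ht).1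
    · have hδ : min (1 + r) δ₀ ∈ Ioo (0 : ℝ) 1 :=
        ⟨lt_min (by linarith) hδ₀.1, (min_le_right _ _).trans_lt hδ₀.2⟩
      have hlt := (alternative _ hδ).resolve_right fun h =>
        hnot <| h.mono fun t ht => by linarith [min_le_right (1 + r) δ₀]
      filter_upwards [hlt] with t ht
      linarith [min_le_left (1 + r) δ₀]

lemma exists_countable_forall_exists_le {ι α : Type*} [LinearOrder α] [TopologicalSpace α]
    [OrderClosedTopology α] [SecondCountableTopology α] (f : ι → α) :
    ∃ D : Set ι, D.Countable ∧ ∀ i, ∃ d ∈ D, f i ≤ f d := by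
  obtain ⟨S, hS, hdense, -, htop⟩ := exists_countable_dense_bot_top (range f)
  refine ⟨rangeSplitting f '' S, hS.image _, fun i => ?_⟩
  obtain ⟨y, hy, hle⟩ := hdense.exists_ge' htop ⟨f i, i, rfl⟩
  exact ⟨_, mem_image_of_mem _ hy, (apply_rangeSplitting f y).symm ▸ hle⟩

lemma exists_nonneg_eq_exp_neg_mul {x y : ℝ} (hsign : SignType.sign x = SignType.sign y)
    (hle : |x| ≤ |y|) : ∃ s ≥ 0, x = Real.exp (-s) * y := by
  rcases eq_or_ne x 0 with rfl | hx
  · rw [_root_.sign_zero, eq_comm, _root_.sign_eq_zero_iff] at hsign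
    exact ⟨0, le_rfl, by rw [hsign, mul_zero]⟩
  have hy : y ≠ 0 := abs_pos.1 ((abs_pos.2 hx).trans_le hle)
  refine ⟨Real.log (|y| / |x|), Real.log_nonneg ((one_le_div (abs_pos.2 hx)).2 hle), ?_⟩
  rw [Real.exp_neg, Real.exp_log (div_pos (abs_pos.2 hy) (abs_pos.2 hx)), inv_div]
  calc x = SignType.sign y * |x| := by rw [← hsign, sign_mul_abs]
    _ = |x| / |y| * (SignType.sign y * |y|) := by
      rw [mul_left_comm, div_mul_cancel₀ _ (abs_pos.2 hy).ne']
    _ = |x| / |y| * y := by rw [sign_mul_abs]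

lemma exists_countable_forall_exists_eq_exp_neg_mul {ι : Type*} (f : ι → ℝ) :
    ∃ D : Set ι, D.Countable ∧ ∀ i, ∃ d ∈ D, ∃ s ≥ 0, f i = Real.exp (-s) * f d := by
  choose D hD hcofinal using fun σ : SignType =>
    exists_countable_forall_exists_le fun i : {i // SignType.sign (f i) = σ} => |f i|
  refine ⟨⋃ σ, Subtype.val '' D σ, countable_iUnion fun σ => (hD σ).image _, fun i => ?_⟩
  obtain ⟨d, hd, hle⟩ := hcofinal _ ⟨i, rfl⟩
  exact ⟨d, mem_iUnion.2 ⟨_, mem_image_of_mem _ hd⟩, exists_nonneg_eq_exp_neg_mul d.2.symm hle⟩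

end Scalar

section InnerProductSpace

variable {E : Type*} [NormedAddCommGroup E] [InnerProductSpace ℝ E]

lemma tendsto_of_tendsto_inner_one {ι : Type*} {l : Filter ι} {b : ι → E} {u : E}
    (hb : ∀ᶠ t in l, ‖b t‖ = 1) (hu : ‖u‖ = 1) (h : Tendsto (fun t => ⟪b t, u⟫) l (𝓝 1)) :
    Tendsto b l (𝓝 u) := by
  have hsq : Tendsto (fun t => ‖b t - u‖ ^ 2) l (𝓝 0) := by
    have hlim : Tendsto (fun t => 2 - 2 * ⟪b t, u⟫) l (𝓝 0) := by
      simpa using (h.const_mul 2).const_sub 2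
    refine hlim.congr' (hb.mono fun t ht => ?_)
    change 2 - 2 * ⟪b t, u⟫ = ‖b t - u‖ ^ 2
    rw [norm_sub_sq_real, ht, hu]
    ring
  rw [tendsto_iff_norm_sub_tendsto_zero]
  simpa using hsq.sqrt

lemma one_sub_inner_sq_sub_norm_le {b u : E} (v : E) (hb : ‖b‖ = 1) (hu : ‖u‖ = 1) :
    1 - ⟪b, u⟫ ^ 2 - ‖v - u‖ ≤ ⟪v, u⟫ - ⟪b, v⟫ * ⟪b, u⟫ := by
  have hsq : ‖u - ⟪b, u⟫ • b‖ ^ 2 = 1 - ⟪b, u⟫ ^ 2 := by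
    rw [norm_sub_sq_real, norm_smul, inner_smul_right, real_inner_comm b u, hb, hu, mul_one,
      Real.norm_eq_abs, sq_abs]
    ring
  have hle : ‖u - ⟪b, u⟫ • b‖ ≤ 1 := by
    rw [← sq_le_one_iff₀ (norm_nonneg _), hsq]
    linarith [sq_nonneg ⟪b, u⟫]
  have hsplit : ⟪v, u⟫ - ⟪b, v⟫ * ⟪b, u⟫ =
      1 - ⟪b, u⟫ ^ 2 + ⟪v - u, u - ⟪b, u⟫ • b⟫ := by
    simp only [inner_sub_left, inner_sub_right, inner_smul_right, real_inner_self_eq_norm_sq, hu,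
      real_inner_comm b v, real_inner_comm b u]
    ring
  have hcs := (abs_le.1 (abs_real_inner_le_norm (v - u) (u - ⟪b, u⟫ • b))).1
  nlinarith [norm_nonneg (v - u)]

lemma one_add_inner_pos {u x : E} (hu : ‖u‖ = 1) (hx : ‖x‖ = 1) (hne : x ≠ -u) :
    0 < 1 + ⟪x, u⟫ := by
  have := (inner_lt_one_iff_real_of_norm_eq_one hx ((norm_neg u).trans hu)).2 hne
  rw [inner_neg_right] at this
  linarith

/-- `b` is a heading driven by the continuous direction `v`: it solves `ḃ = P_b v` on `[0, ∞)` and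
starts on the unit sphere. Here `P_b v` is spelled out as `v - ⟪b, v⟫ b`, so that the notion makes
sense in every real inner product space. -/
structure IsHeading (v b : ℝ → E) : Prop where
  continuousOn_drive : ContinuousOn v (Ici 0)
  hasDerivAt : ∀ t ≥ 0, HasDerivAt b (v t - ⟪b t, v t⟫ • b t) t
  norm_zero : ‖b 0‖ = 1

namespace IsHeading

variable {v b b' : ℝ → E} {u : E} {t : ℝ}

lemma continuousOn (h : IsHeading v b) : ContinuousOn b (Ici 0) :=
  fun t ht => (h.hasDerivAt t ht).continuousAt.continuousWithinAt

lemma hasDerivAt_inner_const (h : IsHeading v b) (w : E) (ht : 0 ≤ t) :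
    HasDerivAt (fun s => ⟪b s, w⟫) (⟪v t, w⟫ - ⟪b t, v t⟫ * ⟪b t, w⟫) t := by
  refine ((h.hasDerivAt t ht).inner ℝ (hasDerivAt_const t w)).congr_deriv ?_
  simp [inner_sub_left, inner_smul_left]

lemma hasDerivAt_one_sub_inner (h : IsHeading v b) (h' : IsHeading v b') (ht : 0 ≤ t) :
    HasDerivAt (fun s => 1 - ⟪b s, b' s⟫)
      (-(⟪b t, v t⟫ + ⟪b' t, v t⟫) * (1 - ⟪b t, b' t⟫)) t := by
  refine (((h.hasDerivAt t ht).inner ℝ (h'.hasDerivAt t ht)).const_sub 1).congr_deriv ?_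
  simp only [inner_sub_left, inner_sub_right, inner_smul_right, real_inner_smul_left,
    real_inner_comm (b' t) (v t)]
  ring

lemma exists_pos_one_sub_inner_eq (h : IsHeading v b) (h' : IsHeading v b') (ht : 0 ≤ t) :
    ∃ c > 0, 1 - ⟪b t, b' t⟫ = c * (1 - ⟪b 0, b' 0⟫) :=
  ⟨_, Real.exp_pos _, eq_exp_integral_smul_of_hasDerivAt (y := fun t => 1 - ⟪b t, b' t⟫)
    ((h.continuousOn.inner h.continuousOn_drive).add
      (h'.continuousOn.inner h.continuousOn_drive)).neg
    (fun _ hs => h.hasDerivAt_one_sub_inner h' hs) ht⟩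

lemma norm_eq_one (h : IsHeading v b) (ht : 0 ≤ t) : ‖b t‖ = 1 := by
  obtain ⟨c, -, hc⟩ := h.exists_pos_one_sub_inner_eq h ht
  rw [real_inner_self_eq_norm_sq, real_inner_self_eq_norm_sq, h.norm_zero, one_pow, sub_self,
    mul_zero, sub_eq_zero] at hc
  exact (pow_eq_one_iff_of_nonneg (norm_nonneg _) two_ne_zero).1 hc.symm

lemma apply_eq_iff_apply_zero_eq (h : IsHeading v b) (h' : IsHeading v b') (ht : 0 ≤ t) :
    b t = b' t ↔ b 0 = b' 0 := by
  obtain ⟨c, hc, heq⟩ := h.exists_pos_one_sub_inner_eq h' ht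
  rw [← inner_eq_one_iff_of_norm_eq_one (𝕜 := ℝ) (h.norm_eq_one ht) (h'.norm_eq_one ht),
    ← inner_eq_one_iff_of_norm_eq_one (𝕜 := ℝ) h.norm_zero h'.norm_zero,
    eq_comm, ← sub_eq_zero, heq, mul_eq_zero_iff_left hc.ne', sub_eq_zero, eq_comm]

lemma congr_drive {v' : ℝ → E} (h : IsHeading v b) (hv : EqOn v v' (Ici 0)) : IsHeading v' b where
  continuousOn_drive := h.continuousOn_drive.congr hv.symm
  hasDerivAt t ht := hv ht ▸ h.hasDerivAt t ht
  norm_zero := h.norm_zero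

lemma comp_add_const (h : IsHeading v b) {s : ℝ} (hs : 0 ≤ s) :
    IsHeading (fun t => v (t + s)) (fun t => b (t + s)) where
  continuousOn_drive := h.continuousOn_drive.comp (by fun_prop) fun _ ht => add_nonneg ht hs
  hasDerivAt t ht := (h.hasDerivAt (t + s) (add_nonneg ht hs)).comp_add_const t s
  norm_zero := h.norm_eq_one (by simpa using hs)

theorem tendsto_or_tendsto_neg (h : IsHeading v b) (hu : ‖u‖ = 1) (hv : Tendsto v atTop (𝓝 u)) :
    Tendsto b atTop (𝓝 u) ∨ Tendsto b atTop (𝓝 (-u)) := by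
  have hnorm : ∀ᶠ t in atTop, ‖b t‖ = 1 :=
    (eventually_ge_atTop 0).mono fun _ => h.norm_eq_one
  have hbound : ∀ᶠ t in atTop, |⟪b t, u⟫| ≤ 1 := hnorm.mono fun t ht => by
    simpa [ht, hu] using abs_real_inner_le_norm (b t) u
  have hdrift : ∀ ε > 0, ∀ᶠ t in atTop,
      1 - ⟪b t, u⟫ ^ 2 - ε ≤ ⟪v t, u⟫ - ⟪b t, v t⟫ * ⟪b t, u⟫ := fun ε hε => by
    filter_upwards [hnorm,
      (tendsto_iff_norm_sub_tendsto_zero.1 hv).eventually (gt_mem_nhds hε)] with t ht hlt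
    linarith [one_sub_inner_sq_sub_norm_le (v t) ht hu]
  refine (tendsto_one_or_tendsto_neg_one_of_hasDerivAt
    ((eventually_ge_atTop 0).mono fun _ => h.hasDerivAt_inner_const u) hbound hdrift).imp
    (tendsto_of_tendsto_inner_one hnorm hu) fun hneg =>
      tendsto_of_tendsto_inner_one hnorm ((norm_neg u).trans hu) ?_
  simpa using hneg.neg

theorem apply_zero_eq_of_tendsto_neg (h : IsHeading v b) (h' : IsHeading v b') (hu : ‖u‖ = 1)
    (hv : Tendsto v atTop (𝓝 u)) (hb : Tendsto b atTop (𝓝 (-u)))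
    (hb' : Tendsto b' atTop (𝓝 (-u))) : b 0 = b' 0 := by
  have hneg {c : ℝ → E} (hc : Tendsto c atTop (𝓝 (-u))) : ∀ᶠ t in atTop, ⟪c t, v t⟫ < 0 :=
    (hc.inner hv).eventually (gt_mem_nhds (by simp [hu]))
  obtain ⟨T, hT⟩ := eventually_atTop.1
    ((eventually_ge_atTop (0 : ℝ)).and ((hneg hb).and (hneg hb')))
  have hle {t : ℝ} (ht : 0 ≤ t) : ⟪b t, b' t⟫ ≤ 1 := by
    simpa [h.norm_eq_one ht, h'.norm_eq_one ht] using real_inner_le_norm (b t) (b' t)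
  have hmono : MonotoneOn (fun t => 1 - ⟪b t, b' t⟫) (Ici T) :=
    monotoneOn_of_hasDerivWithinAt_nonneg (convex_Ici T)
      (fun t ht => (h.hasDerivAt_one_sub_inner h' (hT t ht).1).continuousAt.continuousWithinAt)
      (fun t ht => (h.hasDerivAt_one_sub_inner h'
        (hT t (interior_subset ht)).1).hasDerivWithinAt)
      fun t ht => by
        obtain ⟨ht0, hbt, hbt'⟩ := hT t (interior_subset ht)
        exact mul_nonneg (by linarith) (sub_nonneg.2 (hle ht0))
  have hlim : Tendsto (fun t => 1 - ⟪b t, b' t⟫) atTop (𝓝 0) := by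
    simpa [hu] using (hb.inner (𝕜 := ℝ) hb').const_sub 1
  have hnonpos : 1 - ⟪b T, b' T⟫ ≤ 0 :=
    ge_of_tendsto hlim <| (eventually_ge_atTop T).mono fun t ht => hmono self_mem_Ici ht ht
  have hT0 : 0 ≤ T := (hT T le_rfl).1
  exact (h.apply_eq_iff_apply_zero_eq h' hT0).1 <|
    (inner_eq_one_iff_of_norm_eq_one (𝕜 := ℝ) (h.norm_eq_one hT0) (h'.norm_eq_one hT0)).1 <|
      (hle hT0).antisymm (sub_nonpos.1 hnonpos)

lemma const_neg (hu : ‖u‖ = 1) : IsHeading (fun _ => u) fun _ => -u where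
  continuousOn_drive := continuousOn_const
  hasDerivAt t _ := (hasDerivAt_const t (-u)).congr_deriv (by simp [hu])
  norm_zero := (norm_neg u).trans hu

lemma ne_neg (h : IsHeading (fun _ => u) b) (hu : ‖u‖ = 1) (h0 : b 0 ≠ -u) (ht : 0 ≤ t) :
    b t ≠ -u :=
  (h.apply_eq_iff_apply_zero_eq (const_neg hu) ht).not.2 h0

theorem tendsto_of_ne_neg (h : IsHeading (fun _ => u) b) (hu : ‖u‖ = 1) (h0 : b 0 ≠ -u) :
    Tendsto b atTop (𝓝 u) :=
  (h.tendsto_or_tendsto_neg hu tendsto_const_nhds).resolve_right fun hneg =>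
    h0 <| h.apply_zero_eq_of_tendsto_neg (const_neg hu) hu tendsto_const_nhds hneg
      tendsto_const_nhds

end IsHeading

end InnerProductSpace

section Stereographic

variable {E : Type*} [NormedAddCommGroup E] [InnerProductSpace ℝ E]
  [Fact (Module.finrank ℝ E = 2)] (o : Orientation ℝ E (Fin 2))

/-- The coordinate of the stereographic projection of the unit circle from `-u`, that is
`tan (φ / 2)` for the oriented angle `φ` from `u` to `x`. At `x = -u` it has the junk value `0`. -/
noncomputable def stereoCoord (u x : E) : ℝ := o.areaForm u x / (1 + ⟪x, u⟫)

variable {u x y : E}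

lemma one_add_inner_eq_two_div (hu : ‖u‖ = 1) (hx : ‖x‖ = 1) (hne : x ≠ -u) :
    1 + ⟪x, u⟫ = 2 / (1 + stereoCoord o u x ^ 2) := by
  have hpos := one_add_inner_pos hu hx hne
  have hcircle : ⟪x, u⟫ ^ 2 + o.areaForm u x ^ 2 = 1 := by
    simpa [real_inner_comm, hu, hx] using o.inner_sq_add_areaForm_sq u x
  rw [eq_div_iff (by positivity), stereoCoord]
  field_simp
  linear_combination hcircle

lemma eq_of_stereoCoord_eq (hu : ‖u‖ = 1) (hx : ‖x‖ = 1) (hy : ‖y‖ = 1) (hxu : x ≠ -u)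
    (hyu : y ≠ -u) (h : stereoCoord o u x = stereoCoord o u y) : x = y := by
  have hinner : ⟪x, u⟫ = ⟪y, u⟫ := by
    have := one_add_inner_eq_two_div o hu hx hxu
    rw [h, ← one_add_inner_eq_two_div o hu hy hyu] at this
    exact add_left_cancel this
  have harea : o.areaForm u x = o.areaForm u y := by
    rwa [stereoCoord, stereoCoord, hinner, div_left_inj' (one_add_inner_pos hu hy hyu).ne'] at h
  rw [← inner_eq_one_iff_of_norm_eq_one (𝕜 := ℝ) hx hy]
  calc ⟪x, y⟫ = ‖u‖ ^ 2 * ⟪x, y⟫ := by simp [hu]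
    _ = ⟪u, x⟫ * ⟪u, y⟫ + o.areaForm u x * o.areaForm u y :=
      (o.inner_mul_inner_add_areaForm_mul_areaForm u x y).symm
    _ = ⟪u, y⟫ ^ 2 + o.areaForm u y ^ 2 := by
      rw [real_inner_comm x u, real_inner_comm y u, hinner, harea, sq, sq]
    _ = 1 := by rw [o.inner_sq_add_areaForm_sq, hu, hy]; norm_num

lemma IsHeading.stereoCoord_eq {b : ℝ → E} (h : IsHeading (fun _ => u) b) (hu : ‖u‖ = 1)
    (h0 : b 0 ≠ -u) {t : ℝ} (ht : 0 ≤ t) :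
    stereoCoord o u (b t) = Real.exp (-t) * stereoCoord o u (b 0) := by
  have hderiv : ∀ t ≥ 0, HasDerivAt (fun s => stereoCoord o u (b s))
      ((-1 : ℝ) • stereoCoord o u (b t)) t := fun t ht => by
    have harea : HasDerivAt (fun s => o.areaForm u (b s)) (-⟪b t, u⟫ * o.areaForm u (b t)) t := by
      have hinner (x : E) : ⟪x, o.rightAngleRotation u⟫ = o.areaForm u x := by
        rw [real_inner_comm, o.inner_rightAngleRotation_left]
      simpa only [hinner, o.areaForm_apply_self, zero_sub, neg_mul] using
        h.hasDerivAt_inner_const (o.rightAngleRotation u) ht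
    have hne : 1 + ⟪b t, u⟫ ≠ 0 :=
      (one_add_inner_pos hu (h.norm_eq_one ht) (h.ne_neg hu h0 ht)).ne'
    refine (harea.div ((h.hasDerivAt_inner_const u ht).const_add 1) hne).congr_deriv ?_
    rw [real_inner_self_eq_norm_sq, hu, stereoCoord, smul_eq_mul]
    field_simp
    ring
  simpa using eq_exp_integral_smul_of_hasDerivAt continuousOn_const hderiv ht

end Stereographic

section Cascade

variable {E F : Type*} [NormedAddCommGroup E] [InnerProductSpace ℝ E]
  [NormedAddCommGroup F] [InnerProductSpace ℝ F]

/-- An exceptional solution of the cascade `ḃ₁ = P_{b₁} u`, `ḃ₂ = P_{b₂} f(b₁)`: the first heading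
does not start at the equilibrium `-u`, and yet the second one converges to `-f u`. -/
structure IsExceptional (u : E) (f : E → F) (b₁ : ℝ → E) (b₂ : ℝ → F) : Prop where
  fst : IsHeading (fun _ => u) b₁
  snd : IsHeading (f ∘ b₁) b₂
  fst_zero_ne : b₁ 0 ≠ -u
  tendsto_snd : Tendsto b₂ atTop (𝓝 (-f u))

/-- The set of initial values of exceptional solutions. -/
def exceptionalSet (u : E) (f : E → F) : Set (E × F) :=
  {p | ∃ b₁ b₂, IsExceptional u f b₁ b₂ ∧ b₁ 0 = p.1 ∧ b₂ 0 = p.2}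

variable {u : E} {f : E → F}

namespace IsExceptional

variable {b₁ c₁ : ℝ → E} {b₂ c₂ : ℝ → F} {s : ℝ}

lemma comp_add_const (h : IsExceptional u f b₁ b₂) (hu : ‖u‖ = 1) (hs : 0 ≤ s) :
    IsExceptional u f (fun t => b₁ (t + s)) fun t => b₂ (t + s) where
  fst := h.fst.comp_add_const hs
  snd := h.snd.comp_add_const hs
  fst_zero_ne := h.fst.ne_neg hu h.fst_zero_ne (by simpa using hs)
  tendsto_snd := h.tendsto_snd.comp (tendsto_atTop_add_const_right atTop s tendsto_id)

lemma mem_exceptionalSet (h : IsExceptional u f b₁ b₂) (hu : ‖u‖ = 1) (hs : 0 ≤ s) :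
    (b₁ s, b₂ s) ∈ exceptionalSet u f :=
  ⟨_, _, h.comp_add_const hu hs, by simp only [zero_add], by simp only [zero_add]⟩

end IsExceptional

lemma snd_eq_of_mem_exceptionalSet (hu : ‖u‖ = 1) (hf : ContinuousAt f u) (hfu : ‖f u‖ = 1)
    {x : E} {y y' : F} (h : (x, y) ∈ exceptionalSet u f) (h' : (x, y') ∈ exceptionalSet u f) :
    y = y' := by
  obtain ⟨b₁, b₂, hb, rfl, rfl⟩ := h
  obtain ⟨c₁, c₂, hc, hfst, rfl⟩ := h'
  have hdrive : EqOn (f ∘ c₁) (f ∘ b₁) (Ici 0) := fun t ht =>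
    congrArg f ((hc.fst.apply_eq_iff_apply_zero_eq hb.fst ht).2 hfst)
  exact hb.snd.apply_zero_eq_of_tendsto_neg (hc.snd.congr_drive hdrive) hfu
    (hf.tendsto.comp (hb.fst.tendsto_of_ne_neg hu hb.fst_zero_ne)) hb.tendsto_snd hc.tendsto_snd

theorem isSigmaCompact_exceptionalSet [Fact (Module.finrank ℝ E = 2)] (hu : ‖u‖ = 1)
    (hf : ContinuousAt f u) (hfu : ‖f u‖ = 1) : IsSigmaCompact (exceptionalSet u f) := by
  have : FiniteDimensional ℝ E := .of_fact_finrank_eq_two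
  let o : Orientation ℝ E (Fin 2) :=
    ((stdOrthonormalBasis ℝ E).reindex (finCongr Fact.out)).toBasis.orientation
  obtain ⟨D, hD, hcover⟩ := exists_countable_forall_exists_eq_exp_neg_mul
    fun p : {p : (ℝ → E) × (ℝ → F) // IsExceptional u f p.1 p.2} => stereoCoord o u (p.1.1 0)
  have heq : exceptionalSet u f = ⋃ p ∈ D, (fun s => (p.1.1 s, p.1.2 s)) '' Ici (0 : ℝ) := by
    refine Subset.antisymm ?_ (iUnion₂_subset fun p _ => ?_)
    · rintro ⟨x, y⟩ ⟨c₁, c₂, hc, rfl, rfl⟩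
      obtain ⟨⟨⟨b₁, b₂⟩, hb⟩, hmem, s, hs, hstereo⟩ := hcover ⟨(c₁, c₂), hc⟩
      have hfst : b₁ s = c₁ 0 :=
        eq_of_stereoCoord_eq o hu (hb.fst.norm_eq_one hs) hc.fst.norm_zero
          (hb.fst.ne_neg hu hb.fst_zero_ne hs) hc.fst_zero_ne
          ((hb.fst.stereoCoord_eq o hu hb.fst_zero_ne hs).trans hstereo.symm)
      have hsnd : b₂ s = c₂ 0 :=
        snd_eq_of_mem_exceptionalSet hu hf hfu (hb.mem_exceptionalSet hu hs)
          ⟨c₁, c₂, hc, hfst.symm, rfl⟩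
      exact mem_iUnion₂.2 ⟨_, hmem, s, hs, Prod.ext hfst hsnd⟩
    · rintro _ ⟨s, hs, rfl⟩
      exact p.2.mem_exceptionalSet hu hs
  rw [heq]
  exact isSigmaCompact_biUnion hD fun p _ =>
    (isSigmaCompact_univ.of_isClosed_subset isClosed_Ici (subset_univ _)).image_of_continuousOn
      (p.2.fst.continuousOn.prodMk p.2.snd.continuousOn)

end Cascade

section Plane

lemma measurableSet_of_isSigmaCompact {X : Type*} [TopologicalSpace X] [T2Space X]
    [MeasurableSpace X] [BorelSpace X] {s : Set X} (hs : IsSigmaCompact s) : MeasurableSet s := by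
  obtain ⟨K, hK, rfl⟩ := hs
  exact MeasurableSet.iUnion fun n => (hK n).measurableSet

lemma continuous_rot (α : ℝ) : Continuous (rot α) := by
  refine (PiLp.continuous_toLp 2 _).comp <| continuous_pi <| Fin.forall_fin_two.2 ⟨?_, ?_⟩
  · change Continuous fun v : EuclideanSpace ℝ (Fin 2) => Real.cos α * v 0 - Real.sin α * v 1
    fun_prop
  · change Continuous fun v : EuclideanSpace ℝ (Fin 2) => Real.sin α * v 0 + Real.cos α * v 1
    fun_prop

lemma norm_rot (α : ℝ) (v : EuclideanSpace ℝ (Fin 2)) : ‖rot α v‖ = ‖v‖ := by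
  rw [EuclideanSpace.norm_eq, EuclideanSpace.norm_eq]
  congr 1
  simp only [Fin.sum_univ_two, Real.norm_eq_abs, sq_abs, rot, WithLp.equiv_symm_apply,
    Matrix.cons_val_zero, Matrix.cons_val_one]
  linear_combination (v 0 ^ 2 + v 1 ^ 2) * Real.sin_sq_add_cos_sq α

lemma continuous_dir : Continuous dir :=
  (PiLp.continuous_toLp 2 _).comp <| continuous_pi <|
    Fin.forall_fin_two.2 ⟨Real.continuous_cos, Real.continuous_sin⟩

lemma norm_dir (θ : ℝ) : ‖dir θ‖ = 1 := by
  simp [EuclideanSpace.norm_eq, dir]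

lemma countable_setOf_dir_eq (z : EuclideanSpace ℝ (Fin 2)) : {θ | dir θ = z}.Countable := by
  rcases eq_empty_or_nonempty {θ | dir θ = z} with h | ⟨θ₀, rfl⟩
  · simp only [h, countable_empty]
  refine (countable_range fun k : ℤ => θ₀ + 2 * π * k).mono fun θ hθ => ?_
  have hangle : (θ : Real.Angle) = θ₀ :=
    Real.Angle.cos_sin_inj (congrArg (· 0) hθ) (congrArg (· 1) hθ)
  obtain ⟨k, hk⟩ := Real.Angle.angle_eq_iff_two_pi_dvd_sub.1 hangle
  exact ⟨k, by simp only [← hk, add_sub_cancel]⟩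

lemma volume_preimage_dir_exceptionalSet {u : EuclideanSpace ℝ (Fin 2)}
    {f : EuclideanSpace ℝ (Fin 2) → EuclideanSpace ℝ (Fin 2)} (hu : ‖u‖ = 1)
    (hf : ContinuousAt f u) (hfu : ‖f u‖ = 1) :
    volume (Prod.map dir dir ⁻¹' exceptionalSet u f) = 0 := by
  have : Fact (Module.finrank ℝ (EuclideanSpace ℝ (Fin 2)) = 2) := ⟨finrank_euclideanSpace_fin⟩
  have hmeas : MeasurableSet (Prod.map dir dir ⁻¹' exceptionalSet u f) :=
    (continuous_dir.prodMap continuous_dir).measurable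
      (measurableSet_of_isSigmaCompact (isSigmaCompact_exceptionalSet hu hf hfu))
  rw [Measure.volume_eq_prod, Measure.measure_prod_null hmeas]
  refine Eventually.of_forall fun θ₁ => Set.Countable.measure_zero ?_ volume
  rcases eq_empty_or_nonempty (Prod.mk θ₁ ⁻¹' (Prod.map dir dir ⁻¹' exceptionalSet u f))
    with h | ⟨θ₀, hθ₀⟩
  · simp only [h, countable_empty]
  · exact (countable_setOf_dir_eq (dir θ₀)).mono fun θ₂ hθ₂ =>
      snd_eq_of_mem_exceptionalSet hu hf hfu hθ₂ hθ₀

end Plane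

theorem stmt9_general {u : EuclideanSpace ℝ (Fin 2)} (hu : ‖u‖ = 1)
    {f : EuclideanSpace ℝ (Fin 2) → EuclideanSpace ℝ (Fin 2)} (hf : Continuous f)
    (hfu : ‖f u‖ = 1) :
    ∀ᵐ θ : ℝ × ℝ ∂volume, ∀ b₁ b₂ : ℝ → EuclideanSpace ℝ (Fin 2),
      (∀ t ≥ (0 : ℝ), HasDerivAt b₁ (proj (b₁ t) u) t) →
      (∀ t ≥ (0 : ℝ), HasDerivAt b₂ (proj (b₂ t) (f (b₁ t))) t) →
      b₁ 0 = dir θ.1 → b₂ 0 = dir θ.2 →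
      Tendsto b₁ atTop (𝓝 u) ∧ Tendsto b₂ atTop (𝓝 (f u)) := by
  have hfst : ∀ᵐ θ : ℝ × ℝ ∂volume, dir θ.1 ≠ -u :=
    Measure.quasiMeasurePreserving_fst.ae ((countable_setOf_dir_eq (-u)).ae_notMem volume)
  have hsnd : ∀ᵐ θ : ℝ × ℝ ∂volume, Prod.map dir dir θ ∉ exceptionalSet u f :=
    measure_eq_zero_iff_ae_notMem.1 (volume_preimage_dir_exceptionalSet hu hf.continuousAt hfu)
  filter_upwards [hfst, hsnd] with θ hne hnot b₁ b₂ hb₁ hb₂ h₁ h₂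
  have head₁ : IsHeading (fun _ => u) b₁ := ⟨continuousOn_const, hb₁, h₁ ▸ norm_dir θ.1⟩
  have head₂ : IsHeading (f ∘ b₁) b₂ :=
    ⟨hf.comp_continuousOn head₁.continuousOn, hb₂, h₂ ▸ norm_dir θ.2⟩
  have hne₁ : b₁ 0 ≠ -u := h₁ ▸ hne
  have hlim : Tendsto b₁ atTop (𝓝 u) := head₁.tendsto_of_ne_neg hu hne₁
  exact ⟨hlim, (head₂.tendsto_or_tendsto_neg hfu ((hf.tendsto u).comp hlim)).resolve_right
    fun hneg => hnot ⟨b₁, b₂, ⟨head₁, head₂, hne₁, hneg⟩, h₁, h₂⟩⟩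

/-- Almost-global asymptotic attractivity of (b₁*, R(α)b₁*) for the cascade
ḃ₁ = P_{b₁} b₁*, ḃ₂ = P_{b₂} R(α) b₁ on the torus: for a.e. pair of initial angles,
every solution converges to (b₁*, R(α)b₁*). -/
theorem stmt9 (b1s : EuclideanSpace ℝ (Fin 2)) (hb1s : ‖b1s‖ = 1) (α : ℝ) :
    ∀ᵐ θ : ℝ × ℝ ∂volume, ∀ b1 b2 : ℝ → EuclideanSpace ℝ (Fin 2),
      (∀ t ≥ (0 : ℝ), HasDerivAt b1 (proj (b1 t) b1s) t) →
      (∀ t ≥ (0 : ℝ), HasDerivAt b2 (proj (b2 t) (rot α (b1 t))) t) →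
      b1 0 = dir θ.1 → b2 0 = dir θ.2 →
      Filter.Tendsto b1 Filter.atTop (nhds b1s)
      ∧ Filter.Tendsto b2 Filter.atTop (nhds (rot α b1s)) :=
  stmt9_general hb1s (continuous_rot α) ((norm_rot α b1s).trans hb1s)
end

section
/- Let N be a nonempty finite index set, let b_i* ∈ ℝ² be a unit vector, and for each j ∈ N let b_j* ∈ ℝ² be a unit vector and α_j ∈ ℝ an angle with b_i* = R(α_j) b_j*. Let b : [0, ∞) → ℝ² be differentiable with ḃ(t) = P_{b(t)} Σ_{j ∈ N} R(α_j) b_j* for all t ≥ 0 (i.e., all neighbors' headings are held constant at their target values b_j*), where b(0) is a unit vector with b(0) ≠ −b_i*. Then ḃ(t) = |N| · P_{b(t)} b_i*, and b(t) → b_i* as t → ∞. -/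
open scoped RealInnerProductSpace
open Real Filter MeasureTheory

/-!
Put `x = ⟪b, a⟫` and let `w` be the component of `b` orthogonal to the unit vector `a`. Along
`ḃ = n P_b a` the three quantities `1 + x`, `1 - x` and `w` satisfy homogeneous linear equations,
with coefficients `n (1 - x)`, `n (-1 - x)` and `n (0 - x)`. With `G = exp (-n ∫ x)` they are
therefore `exp (n t) G`, `exp (-n t) G` and `G` times their initial values. The first two add up
to `2`, which determines `G` and so gives `b` in closed form. If `x 0 > -1`, the term with
`exp (n t)` dominates and `b` tends to `a`.
-/

section LinearODE

variable {E : Type*} [NormedAddCommGroup E] [NormedSpace ℝ E]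

theorem exists_hasDerivWithinAt_of_continuousOn_Ici [CompleteSpace E] {g : ℝ → E} {t₀ : ℝ}
    (hg : ContinuousOn g (Set.Ici t₀)) :
    ∃ G : ℝ → E, ∀ t ∈ Set.Ici t₀, HasDerivWithinAt G (g t) (Set.Ici t₀) t := by
  have hcont : Continuous fun t ↦ g (max t₀ t) :=
    hg.comp_continuous (by fun_prop) fun t ↦ le_max_left t₀ t
  refine ⟨fun t ↦ ∫ r in t₀..t, g (max t₀ r), fun t ht ↦ ?_⟩
  simpa only [max_eq_right (Set.mem_Ici.mp ht)] using
    (hcont.integral_hasStrictDerivAt t₀ t).hasDerivAt.hasDerivWithinAt (s := Set.Ici t₀)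

theorem eq_exp_sub_smul_of_isIntegralCurveOn_smul {s : Set ℝ} (hs : Convex ℝ s) {G g : ℝ → ℝ}
    (hG : ∀ t ∈ s, HasDerivWithinAt G (g t) s t) {w : ℝ → E}
    (hw : IsIntegralCurveOn w (fun t x ↦ g t • x) s) {t₀ t : ℝ} (ht₀ : t₀ ∈ s) (ht : t ∈ s) :
    w t = exp (G t - G t₀) • w t₀ := by
  have hderiv : ∀ r ∈ s, HasDerivWithinAt (fun r ↦ exp (-G r) • w r) 0 s r := fun r hr ↦
    ((hG r hr).neg.exp.smul (hw r hr)).congr_deriv (by module)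
  have hconst : exp (-G t) • w t = exp (-G t₀) • w t₀ := by
    simpa [sub_eq_zero] using hs.norm_image_sub_le_of_norm_hasDerivWithin_le
      (C := 0) hderiv (by simp) ht₀ ht
  calc w t = exp (G t) • exp (-G t) • w t := by rw [smul_smul, ← exp_add]; simp
    _ = exp (G t - G t₀) • w t₀ := by rw [hconst, smul_smul, ← exp_add, sub_eq_add_neg]

end LinearODE

section ProjectedFlow

variable {E : Type*} [NormedAddCommGroup E] [InnerProductSpace ℝ E]

/-- The projection `P_b v = v - ⟪b, v⟫ b` in an arbitrary real inner product space, the right-hand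
side of the projected dynamics. As `b` is not normalised, this is the orthogonal projection onto
the complement of `b` only when `b` is a unit vector. -/
def perpProj (b v : E) : E :=
  v - ⟪b, v⟫ • b

theorem perpProj_smul_right (c : ℝ) (b v : E) : perpProj b (c • v) = c • perpProj b v := by
  simp only [perpProj, real_inner_smul_right, smul_sub, smul_smul]

variable {n : ℝ} {a : E} {b : ℝ → E} {s : Set ℝ}

theorem isIntegralCurveOn_inner (ha : ‖a‖ = 1)
    (hb : IsIntegralCurveOn b (fun _ x ↦ n • perpProj x a) s) :
    IsIntegralCurveOn (fun t ↦ ⟪b t, a⟫) (fun _ x ↦ n * (1 - x ^ 2)) s := by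
  intro t ht
  refine ((hb t ht).inner ℝ (hasDerivWithinAt_const t s a)).congr_deriv ?_
  simp only [perpProj, inner_zero_right, real_inner_smul_left, inner_sub_left,
    real_inner_self_eq_norm_sq, ha]
  ring

theorem isIntegralCurveOn_one_add_mul_inner (ha : ‖a‖ = 1)
    (hb : IsIntegralCurveOn b (fun _ x ↦ n • perpProj x a) s) {ε : ℝ} (hε : ε ^ 2 = 1) :
    IsIntegralCurveOn (fun t ↦ 1 + ε * ⟪b t, a⟫) (fun t y ↦ (n * (ε - ⟪b t, a⟫)) • y) s := by
  intro t ht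
  refine (((isIntegralCurveOn_inner ha hb t ht).const_mul ε).const_add 1).congr_deriv ?_
  simp only [smul_eq_mul]
  linear_combination n * ⟪b t, a⟫ * (-hε)

theorem isIntegralCurveOn_perpProj (ha : ‖a‖ = 1)
    (hb : IsIntegralCurveOn b (fun _ x ↦ n • perpProj x a) s) :
    IsIntegralCurveOn (fun t ↦ perpProj a (b t)) (fun t w ↦ (n * (0 - ⟪b t, a⟫)) • w) s := by
  intro t ht
  have hinner := isIntegralCurveOn_inner ha hb t ht
  simp only [perpProj, real_inner_comm _ a] at hinner ⊢
  refine ((hb t ht).sub (hinner.smul_const a)).congr_deriv ?_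
  simp only [perpProj, real_inner_comm]
  module

theorem exists_common_scaling_of_isIntegralCurveOn_perpProj (ha : ‖a‖ = 1)
    (hb : IsIntegralCurveOn b (fun _ x ↦ n • perpProj x a) (Set.Ici 0)) {t : ℝ} (ht : 0 ≤ t) :
    ∃ G : ℝ, 1 + ⟪b t, a⟫ = exp (n * t) * G * (1 + ⟪b 0, a⟫) ∧
      1 - ⟪b t, a⟫ = exp (-(n * t)) * G * (1 - ⟪b 0, a⟫) ∧
      perpProj a (b t) = G • perpProj a (b 0) := by
  obtain ⟨X, hX⟩ := exists_hasDerivWithinAt_of_continuousOn_Ici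
    (isIntegralCurveOn_inner ha hb).continuousOn
  have hanti (k : ℝ) : ∀ r ∈ Set.Ici (0 : ℝ),
      HasDerivWithinAt (fun r ↦ n * (k * r - X r)) (n * (k - ⟪b r, a⟫)) (Set.Ici 0) r :=
    fun r hr ↦ ((((hasDerivWithinAt_id r _).const_mul k).sub (hX r hr)).const_mul n).congr_deriv
      (by rw [mul_one])
  have hexp (k : ℝ) : exp (n * (k * t - X t) - n * (k * 0 - X 0)) =
      exp (k * (n * t)) * exp (n * (X 0 - X t)) := by
    rw [← exp_add]
    ring_nf
  have hone_add {ε : ℝ} (hε : ε ^ 2 = 1) : 1 + ε * ⟪b t, a⟫ =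
      exp (ε * (n * t)) * exp (n * (X 0 - X t)) * (1 + ε * ⟪b 0, a⟫) := by
    rw [← hexp]
    exact eq_exp_sub_smul_of_isIntegralCurveOn_smul (convex_Ici 0) (hanti ε)
      (isIntegralCurveOn_one_add_mul_inner ha hb hε) Set.self_mem_Ici ht
  have hperp := eq_exp_sub_smul_of_isIntegralCurveOn_smul (convex_Ici 0) (hanti 0)
    (isIntegralCurveOn_perpProj ha hb) Set.self_mem_Ici ht
  refine ⟨exp (n * (X 0 - X t)), ?_, ?_, ?_⟩
  · simpa only [one_mul] using hone_add (one_pow 2)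
  · simpa only [neg_one_mul, ← sub_eq_add_neg] using hone_add (ε := -1) (by norm_num)
  · rwa [hexp, zero_mul, exp_zero, one_mul] at hperp

theorem cosh_add_mul_sinh_smul_eq_of_isIntegralCurveOn_perpProj (ha : ‖a‖ = 1)
    (hb : IsIntegralCurveOn b (fun _ x ↦ n • perpProj x a) (Set.Ici 0)) {t : ℝ} (ht : 0 ≤ t) :
    (cosh (n * t) + ⟪b 0, a⟫ * sinh (n * t)) • b t =
      (sinh (n * t) + ⟪b 0, a⟫ * cosh (n * t)) • a + perpProj a (b 0) := by
  obtain ⟨G, hpos, hneg, hperp⟩ :=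
    exists_common_scaling_of_isIntegralCurveOn_perpProj ha hb ht
  have hG : (cosh (n * t) + ⟪b 0, a⟫ * sinh (n * t)) * G = 1 := by
    rw [cosh_eq, sinh_eq]
    linear_combination -(hpos + hneg) / 2
  have hinner : ⟪b t, a⟫ = G * (sinh (n * t) + ⟪b 0, a⟫ * cosh (n * t)) := by
    rw [cosh_eq, sinh_eq]
    linear_combination (hpos - hneg) / 2
  have hsplit : b t = ⟪b t, a⟫ • a + perpProj a (b t) := by
    rw [perpProj, real_inner_comm, add_sub_cancel]
  rw [hsplit, hinner, hperp, mul_smul G, ← smul_add, smul_smul, hG, one_smul]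

theorem tendsto_cosh_add_mul_sinh_atTop {c : ℝ} (hc : -1 < c) :
    Tendsto (fun t ↦ cosh t + c * sinh t) atTop atTop := by
  have hexp : Tendsto (fun t ↦ (1 + c) / 2 * exp t) atTop atTop :=
    tendsto_exp_atTop.const_mul_atTop (by linarith)
  refine (hexp.atTop_add (tendsto_exp_neg_atTop_nhds_zero.const_mul ((1 - c) / 2))).congr ?_
  intro t
  rw [cosh_eq, sinh_eq]
  ring

theorem tendsto_of_isIntegralCurveOn_perpProj (hn : 0 < n) (ha : ‖a‖ = 1)
    (hb : IsIntegralCurveOn b (fun _ x ↦ n • perpProj x a) (Set.Ici 0)) (h0 : -1 < ⟪b 0, a⟫) :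
    Tendsto b atTop (nhds a) := by
  set y : ℝ → ℝ := fun τ ↦ cosh τ + ⟪b 0, a⟫ * sinh τ
  have htime : Tendsto (fun t ↦ n * t) atTop atTop := tendsto_id.const_mul_atTop hn
  have hytop : Tendsto y atTop atTop := tendsto_cosh_add_mul_sinh_atTop h0
  have hlim : Tendsto (fun τ ↦ a + (y τ)⁻¹ •
      (((⟪b 0, a⟫ - 1) * exp (-τ)) • a + perpProj a (b 0))) atTop (nhds a) := by
    simpa using (hytop.inv_tendsto_atTop.smul (((tendsto_exp_neg_atTop_nhds_zero.const_mul
      (⟪b 0, a⟫ - 1)).smul_const a).add_const (perpProj a (b 0)))).const_add a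
  refine (hlim.comp htime).congr' ?_
  filter_upwards [eventually_ge_atTop 0, (hytop.comp htime).eventually_gt_atTop 0] with t ht hyt
  have hsol : y (n * t) • b t = y (n * t) • a +
      (((⟪b 0, a⟫ - 1) * exp (-(n * t))) • a + perpProj a (b 0)) := by
    rw [cosh_add_mul_sinh_smul_eq_of_isIntegralCurveOn_perpProj ha hb ht, ← cosh_sub_sinh]
    module
  rw [Function.comp_apply] at hyt ⊢
  rw [← smul_right_inj hyt.ne', smul_add, smul_inv_smul₀ hyt.ne', hsol]

theorem neg_one_lt_real_inner_of_ne_neg {x y : E} (hx : ‖x‖ = 1) (hy : ‖y‖ = 1) (hne : x ≠ -y) :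
    -1 < ⟪x, y⟫ := by
  have hlt : ⟪x, -y⟫ < 1 :=
    (inner_lt_one_iff_real_of_norm_eq_one hx (by rwa [norm_neg])).mpr hne
  rw [inner_neg_right] at hlt
  linarith

end ProjectedFlow

theorem stmt10_general {ι E : Type*} [NormedAddCommGroup E] [InnerProductSpace ℝ E]
    {N : Finset ι} (hN : N.Nonempty) {a : E} (ha : ‖a‖ = 1) {v : ι → E} (hv : ∀ j ∈ N, v j = a)
    {b : ℝ → E} (hb : IsIntegralCurveOn b (fun _ x ↦ perpProj x (∑ j ∈ N, v j)) (Set.Ici 0))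
    (h0 : -1 < ⟪b 0, a⟫) :
    (∀ t : ℝ, perpProj (b t) (∑ j ∈ N, v j) = (N.card : ℝ) • perpProj (b t) a) ∧
      Tendsto b atTop (nhds a) := by
  have hsum (x : E) : perpProj x (∑ j ∈ N, v j) = (N.card : ℝ) • perpProj x a := by
    rw [Finset.sum_congr rfl hv, Finset.sum_const, ← Nat.cast_smul_eq_nsmul ℝ,
      perpProj_smul_right]
  simp only [hsum] at hb
  exact ⟨fun t ↦ hsum (b t),
    tendsto_of_isIntegralCurveOn_perpProj (Nat.cast_pos.mpr hN.card_pos) ha hb h0⟩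

/-- If all neighbors hold their target headings b_j* with b_i* = R(α_j) b_j*, then the
dynamics ḃ = P_b Σ_j R(α_j) b_j* reduce to ḃ = |N| P_b b_i*, and b(t) → b_i* provided
b(0) is a unit vector different from -b_i*. -/
theorem stmt10 {ι : Type*} (N : Finset ι) (hN : N.Nonempty)
    (bis : EuclideanSpace ℝ (Fin 2)) (hbis : ‖bis‖ = 1)
    (bjs : ι → EuclideanSpace ℝ (Fin 2)) (αj : ι → ℝ)
    (hunit : ∀ j ∈ N, ‖bjs j‖ = 1)
    (hang : ∀ j ∈ N, bis = rot (αj j) (bjs j))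
    (b : ℝ → EuclideanSpace ℝ (Fin 2))
    (hb : ∀ t ≥ (0 : ℝ), HasDerivAt b (proj (b t) (∑ j ∈ N, rot (αj j) (bjs j))) t)
    (h0 : ‖b 0‖ = 1) (hne : b 0 ≠ -bis) :
    (∀ t : ℝ, proj (b t) (∑ j ∈ N, rot (αj j) (bjs j)) = (N.card : ℝ) • proj (b t) bis)
    ∧ Filter.Tendsto b Filter.atTop (nhds bis) :=
  stmt10_general hN hbis (fun j hj ↦ (hang j hj).symm)
    (fun t ht ↦ (hb t ht).hasDerivWithinAt) (neg_one_lt_real_inner_of_ne_neg h0 hbis hne)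
end

section
/- Let p₁, p₂, p* ∈ ℝ² with p* ≠ p₁ and p* ≠ p₂, and set b₁* := (p* − p₁)/‖p* − p₁‖ and b₂* := (p* − p₂)/‖p* − p₂‖. If b₁* ≠ b₂* and b₁* ≠ −b₂*, then p* = (P_{b₁*} + P_{b₂*})⁻¹ (P_{b₁*} p₁ + P_{b₂*} p₂), where P_b := I₂ − b bᵀ. That is, the common target point is uniquely recovered from the two positions and their target headings. -/
open scoped RealInnerProductSpace
open Real Matrix

/-- The projection matrix `P_b = I₂ - b bᵀ` associated with a vector b ∈ ℝ². -/
noncomputable def projM (b : EuclideanSpace ℝ (Fin 2)) : Matrix (Fin 2) (Fin 2) ℝ :=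
  1 - Matrix.vecMulVec (fun i => b i) (fun i => b i)

/-!
For a unit vector `b`, the matrix `P_b` is positive semidefinite with kernel the line through `b`.
A vector killed by `P_b + P_c` is killed by both summands, so it lies on both lines and vanishes
when they are distinct; hence `P_b + P_c` is positive definite, in particular invertible. Since
`p* - pᵢ` lies on the line through `bᵢ*`, the two points have the same image under `P_{bᵢ*}`, and
adding these two equations gives `(P_{b₁*} + P_{b₂*}) p* = P_{b₁*} p₁ + P_{b₂*} p₂`.
-/

section PosSemidef

open scoped ComplexOrder

variable {𝕜 ι : Type*} [RCLike 𝕜] [Fintype ι]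

theorem posDef_add_of_posSemidef {A B : Matrix ι ι 𝕜} (hA : A.PosSemidef) (hB : B.PosSemidef)
    (hker : ∀ x, A *ᵥ x = 0 → B *ᵥ x = 0 → x = 0) : (A + B).PosDef := by
  refine .of_dotProduct_mulVec_pos (hA.add hB).isHermitian fun x hx => ?_
  refine ((hA.add hB).dotProduct_mulVec_nonneg x).lt_of_ne' fun hzero => hx ?_
  rw [add_mulVec, dotProduct_add, add_eq_zero_iff_of_nonneg (hA.dotProduct_mulVec_nonneg x)
    (hB.dotProduct_mulVec_nonneg x)] at hzero
  exact hker x ((hA.dotProduct_mulVec_zero_iff x).mp hzero.1)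
    ((hB.dotProduct_mulVec_zero_iff x).mp hzero.2)

end PosSemidef

section LinearIndependence

variable {E : Type*} [NormedAddCommGroup E] [NormedSpace ℝ E]

theorem linearIndependent_pair_iff_of_norm_eq {x y : E} (h : ‖x‖ = ‖y‖) :
    LinearIndependent ℝ ![x, y] ↔ x ≠ y ∧ x ≠ -y := by
  rw [← not_iff_not, ← sameRay_or_sameRay_neg_iff_not_linearIndependent,
    sameRay_iff_of_norm_eq h, sameRay_iff_of_norm_eq (h.trans (norm_neg y).symm), ← not_or,
    not_not]

end LinearIndependence

theorem dotProduct_self_eq_one_of_norm_eq_one {ι : Type*} [Fintype ι] {b : EuclideanSpace ℝ ι}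
    (hb : ‖b‖ = 1) : b ⬝ᵥ b = (1 : ℝ) := by
  rw [← inner_self_eq_one_of_norm_eq_one (𝕜 := ℝ) hb]
  exact (EuclideanSpace.inner_eq_star_dotProduct b b).symm

section OrthProjMatrix

variable {ι : Type*} [DecidableEq ι]

/-- The matrix `P_b = I - b bᵀ` in any finite dimension, extending `projM`; for a unit vector `b`
it is the orthogonal projection onto the hyperplane `bᗮ`. -/
def orthProjMatrix (b : EuclideanSpace ℝ ι) : Matrix ι ι ℝ :=
  1 - vecMulVec b b

theorem isHermitian_orthProjMatrix (b : EuclideanSpace ℝ ι) : (orthProjMatrix b).IsHermitian :=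
  isHermitian_one.sub (by rw [IsHermitian, conjTranspose_vecMulVec, star_trivial])

variable [Fintype ι] {b c : EuclideanSpace ℝ ι}

theorem orthProjMatrix_mulVec (b : EuclideanSpace ℝ ι) (x : ι → ℝ) :
    orthProjMatrix b *ᵥ x = x - (b ⬝ᵥ x) • ⇑b := by
  simp [orthProjMatrix, sub_mulVec, vecMulVec_mulVec]

theorem orthProjMatrix_mulVec_self (hb : ‖b‖ = 1) : orthProjMatrix b *ᵥ b = 0 := by
  rw [orthProjMatrix_mulVec, dotProduct_self_eq_one_of_norm_eq_one hb, one_smul, sub_self]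

theorem isIdempotentElem_orthProjMatrix (hb : ‖b‖ = 1) :
    IsIdempotentElem (orthProjMatrix b) := by
  refine IsIdempotentElem.one_sub ?_
  rw [IsIdempotentElem, vecMulVec_mul_vecMulVec, dotProduct_self_eq_one_of_norm_eq_one hb,
    one_smul]

theorem posSemidef_orthProjMatrix (hb : ‖b‖ = 1) : (orthProjMatrix b).PosSemidef := by
  have h := posSemidef_conjTranspose_mul_self (orthProjMatrix b)
  rwa [(isHermitian_orthProjMatrix b).eq, (isIdempotentElem_orthProjMatrix hb).eq] at h

theorem posDef_orthProjMatrix_add (hb : ‖b‖ = 1) (hc : ‖c‖ = 1)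
    (h : LinearIndependent ℝ ![b, c]) : (orthProjMatrix b + orthProjMatrix c).PosDef := by
  refine posDef_add_of_posSemidef (posSemidef_orthProjMatrix hb) (posSemidef_orthProjMatrix hc)
    fun x hxb hxc => ?_
  rw [orthProjMatrix_mulVec, sub_eq_zero] at hxb hxc
  have hbc : (b ⬝ᵥ x) • b = (c ⬝ᵥ x) • c := WithLp.ofLp_injective 2 (hxb.symm.trans hxc)
  have hcoeff : b ⬝ᵥ x = 0 :=
    (LinearIndependent.pair_iff.mp h _ (-(c ⬝ᵥ x)) (by rw [hbc, neg_smul, add_neg_cancel])).1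
  rw [hxb, hcoeff, zero_smul]

theorem orthProjMatrix_mulVec_eq_of_sub_eq_smul (hb : ‖b‖ = 1) {p q : EuclideanSpace ℝ ι} {t : ℝ}
    (h : q - p = t • b) : orthProjMatrix b *ᵥ p = orthProjMatrix b *ᵥ q := by
  rw [sub_eq_iff_eq_add'.mp h, WithLp.ofLp_add, WithLp.ofLp_smul, mulVec_add, mulVec_smul,
    orthProjMatrix_mulVec_self hb, smul_zero, add_zero]

end OrthProjMatrix

theorem stmt14_general {ι : Type*} [Fintype ι] [DecidableEq ι]
    (p1 p2 ps : EuclideanSpace ℝ ι) (h1 : ps ≠ p1) (h2 : ps ≠ p2)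
    (b1s b2s : EuclideanSpace ℝ ι)
    (hb1 : b1s = ‖ps - p1‖⁻¹ • (ps - p1)) (hb2 : b2s = ‖ps - p2‖⁻¹ • (ps - p2))
    (hne : b1s ≠ b2s) (hne' : b1s ≠ -b2s) :
    ⇑ps = (orthProjMatrix b1s + orthProjMatrix b2s)⁻¹ *ᵥ
      (orthProjMatrix b1s *ᵥ p1 + orthProjMatrix b2s *ᵥ p2) := by
  have hd1 : ps - p1 ≠ 0 := sub_ne_zero.mpr h1
  have hd2 : ps - p2 ≠ 0 := sub_ne_zero.mpr h2
  have hn1 : ‖b1s‖ = 1 := hb1 ▸ norm_smul_inv_norm (𝕜 := ℝ) hd1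
  have hn2 : ‖b2s‖ = 1 := hb2 ▸ norm_smul_inv_norm (𝕜 := ℝ) hd2
  have hproj1 : orthProjMatrix b1s *ᵥ p1 = orthProjMatrix b1s *ᵥ ps :=
    orthProjMatrix_mulVec_eq_of_sub_eq_smul hn1
      ((eq_inv_smul_iff₀ (norm_ne_zero_iff.mpr hd1)).mp hb1).symm
  have hproj2 : orthProjMatrix b2s *ᵥ p2 = orthProjMatrix b2s *ᵥ ps :=
    orthProjMatrix_mulVec_eq_of_sub_eq_smul hn2
      ((eq_inv_smul_iff₀ (norm_ne_zero_iff.mpr hd2)).mp hb2).symm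
  have hind : LinearIndependent ℝ ![b1s, b2s] :=
    (linearIndependent_pair_iff_of_norm_eq (hn1.trans hn2.symm)).mpr ⟨hne, hne'⟩
  have hdet : IsUnit (orthProjMatrix b1s + orthProjMatrix b2s).det :=
    (isUnit_iff_isUnit_det _).mp (posDef_orthProjMatrix_add hn1 hn2 hind).isUnit
  rw [hproj1, hproj2, ← add_mulVec, mulVec_mulVec, nonsing_inv_mul _ hdet, one_mulVec]

/-- The common target point is recovered from two positions and their target headings:
if b₁* = (p*-p₁)/‖p*-p₁‖, b₂* = (p*-p₂)/‖p*-p₂‖ and b₁* ≠ ±b₂*, then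
p* = (P_{b₁*} + P_{b₂*})⁻¹ (P_{b₁*} p₁ + P_{b₂*} p₂). -/
theorem stmt14 (p1 p2 ps : EuclideanSpace ℝ (Fin 2)) (h1 : ps ≠ p1) (h2 : ps ≠ p2)
    (b1s b2s : EuclideanSpace ℝ (Fin 2))
    (hb1 : b1s = ‖ps - p1‖⁻¹ • (ps - p1)) (hb2 : b2s = ‖ps - p2‖⁻¹ • (ps - p2))
    (hne : b1s ≠ b2s) (hne' : b1s ≠ -b2s) :
    (fun i => ps i) =
      (projM b1s + projM b2s)⁻¹ *ᵥ
        (projM b1s *ᵥ (fun i => p1 i) + projM b2s *ᵥ (fun i => p2 i)) :=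
  stmt14_general p1 p2 ps h1 h2 b1s b2s hb1 hb2 hne hne'
end
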